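/- arXiv:1805.02072 — 6 statements merged into one kernel-verified Lean document; each statement's English description precedes it below -/
import Mathlib

section
/- Let T be a non-degenerate triangle with angles α, β, γ that satisfy no non-trivial linear equation. Then there exists ε > 0 such that for every finite set P ⊆ ℝ²: (a) there do not exist four distinct points x₁, x₂, x₃, x₄ ∈ P such that each of the triples (x₁, x₂, x₄), (x₁, x₃, x₄), (x₂, x₃, x₄) forms a triangle ε-similar to T; and (b) there do not exist five distinct points x₁, …, x₅ ∈ P such that for every i (indices modulo 5) the triple (x_i, x_{i+1}, x_{i+2}) forms a triangle ε-similar to T. -/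
open EuclideanGeometry

noncomputable section

abbrev Plane := EuclideanSpace ℝ (Fin 2)

/-- A triple of points is a (non-degenerate) triangle if its points are not collinear. -/
def IsTriangle (p : Fin 3 → Plane) : Prop := ¬ Collinear ℝ (Set.range p)

/-- The angle of the triple `p` at its `i`-th vertex. -/
noncomputable def triAngle (p : Fin 3 → Plane) (i : Fin 3) : ℝ :=
  EuclideanGeometry.angle (p (i + 1)) (p i) (p (i + 2))

/-- `p` is ε-similar to `T`: some correspondence of vertices makes corresponding
angles differ by less than ε. -/
def EpsSimilar (ε : ℝ) (p T : Fin 3 → Plane) : Prop :=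
  ∃ σ : Equiv.Perm (Fin 3), ∀ i, |triAngle p i - triAngle T (σ i)| < ε

/-- The finite set `S` forms a triangle ε-similar to `T`. -/
def FormsSimilar (ε : ℝ) (T : Fin 3 → Plane) (S : Finset Plane) : Prop :=
  ∃ p : Fin 3 → Plane, (S : Set Plane) = Set.range p ∧ IsTriangle p ∧ EpsSimilar ε p T

/-- The number of 3-element subsets of `P` forming a triangle ε-similar to `T`. -/
noncomputable def simCount (ε : ℝ) (T : Fin 3 → Plane) (P : Finset Plane) : ℕ :=
  Set.ncard {S : Finset Plane | S ⊆ P ∧ S.card = 3 ∧ FormsSimilar ε T S}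

/-- `hGeo n T ε` = maximum over `n`-point sets `P` of the number of 3-element
subsets of `P` forming a triangle ε-similar to `T`. -/
noncomputable def hGeo (n : ℕ) (T : Fin 3 → Plane) (ε : ℝ) : ℕ :=
  sSup {m | ∃ P : Finset Plane, P.card = n ∧ simCount ε T P = m}

/-- The recurrence defining the sequence `h`. -/
def HRec (h : ℕ → ℕ) : Prop :=
  h 0 = 0 ∧ h 1 = 0 ∧ h 2 = 0 ∧
  ∀ n, 3 ≤ n → IsGreatest
    {m | ∃ a b c : ℕ, a + b + c = n ∧ a ≤ n - 1 ∧ b ≤ n - 1 ∧ c ≤ n - 1 ∧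
      m = a * b * c + h a + h b + h c} (h n)

/-- The triple of points `(a, b, c)` forms a triangle ε-similar to `T`. -/
def TripleEpsSimilar (ε : ℝ) (T : Fin 3 → Plane) (a b c : Plane) : Prop :=
  IsTriangle ![a, b, c] ∧ EpsSimilar ε ![a, b, c] T

/-- The triple of points `(a, b, c)` forms a triangle similar to `T`
(corresponding angles are equal). -/
def TripleSimilar (T : Fin 3 → Plane) (a b c : Plane) : Prop :=
  IsTriangle ![a, b, c] ∧
  ∃ σ : Equiv.Perm (Fin 3), ∀ i, triAngle ![a, b, c] i = triAngle T (σ i)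

/-- The angles `α, β, γ` (of a triangle, so `α + β + γ = π`) satisfy a non-trivial
linear equation: `n₁α + n₂β + n₃γ + n₄π = 0` with integers `|nᵢ| ≤ 5` and
`(n₁, n₂, n₃, n₄)` not a scalar multiple of `(1, 1, 1, -1)`. -/
def SatisfiesNontrivLinear (α β γ : ℝ) : Prop :=
  ∃ n₁ n₂ n₃ n₄ : ℤ, |n₁| ≤ 5 ∧ |n₂| ≤ 5 ∧ |n₃| ≤ 5 ∧ |n₄| ≤ 5 ∧
    (n₁ : ℝ) * α + (n₂ : ℝ) * β + (n₃ : ℝ) * γ + (n₄ : ℝ) * Real.pi = 0 ∧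
    ¬(n₁ = n₂ ∧ n₂ = n₃ ∧ n₄ = -n₁)

/-!
Identify the plane with `ℂ`. Around a common vertex `x₄` of three triangles the signed angles sum to
a multiple of `2π`; for angles without small linear relations such a sum of an odd number of terms
is impossible, which is (a).

For (b), suppose that a closed pentagon has triangles `x i, x (i + 1), x (i + 2)` exactly similar to
`T`. The product of the quotients of consecutive edges is `1`. Its argument makes a signed sum of
five angles a multiple of `π`, so genericity forces exactly one of the five triangles to be oriented
against the others, and its modulus balances the angles opposite the two edges at each step.
Computing the altitude from `x (i + 3)` onto the line `x i, x (i + 1)` along both paths around the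
pentagon adds sign conditions on the order of the angles. Only one assignment of the ordered
angles `α₀ < α₁ < α₂` to the triangles survives, up to reflection, and for it the altitude relation
reads `sin α₀ sin 2α₀ = sin α₂ sin (α₂ - α₀)`, that is `α₂ = 2α₀`, against genericity.

Both contradictions are non-vanishing conditions that are continuous in the angles, and only
finitely many orientations and correspondences of vertices occur, so they persist for small `ε`.
-/

open Finset Filter Topology Real ComplexConjugate

section AngleTriple

/-- The angles of a non-degenerate triangle: three positive reals with sum `π`. -/
structure IsAngleTriple (α : Fin 3 → ℝ) : Prop where
  pos : ∀ k, 0 < α k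
  sum_eq_pi : ∑ k, α k = π

/-- An angle triple that satisfies no linear equation `∑ Nₖ αₖ = n π` with integer coefficients of
absolute value at most `5`, other than the multiples of `α₀ + α₁ + α₂ = π`. -/
structure IsGenericTriple (α : Fin 3 → ℝ) : Prop extends IsAngleTriple α where
  coeff_eq : ∀ (N : Fin 3 → ℤ) (n : ℤ), (∀ k, |N k| ≤ 5) → |n| ≤ 5 →
    ∑ k, N k * α k = n * π → ∀ k, N k = n

variable {α : Fin 3 → ℝ}

namespace IsAngleTriple

lemma comp_perm (h : IsAngleTriple α) (σ : Equiv.Perm (Fin 3)) : IsAngleTriple (α ∘ σ) :=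
  ⟨fun k => h.pos (σ k), (Equiv.sum_comp σ α).trans h.sum_eq_pi⟩

lemma add_lt_pi (h : IsAngleTriple α) {j k : Fin 3} (hjk : j ≠ k) : α j + α k < π := by
  have hsum := h.sum_eq_pi
  rw [Fin.sum_univ_three] at hsum
  have h0 := h.pos 0
  have h1 := h.pos 1
  have h2 := h.pos 2
  fin_cases j <;> fin_cases k <;> first | exact absurd rfl hjk | (simp; linarith)

lemma lt_pi (h : IsAngleTriple α) (k : Fin 3) : α k < π := by
  have hne : k ≠ k + 1 := by fin_cases k <;> decide
  linarith [h.add_lt_pi hne, h.pos (k + 1)]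

lemma sin_pos (h : IsAngleTriple α) (k : Fin 3) : 0 < sin (α k) :=
  sin_pos_of_pos_of_lt_pi (h.pos k) (h.lt_pi k)

end IsAngleTriple

namespace IsGenericTriple

lemma comp_perm (h : IsGenericTriple α) (σ : Equiv.Perm (Fin 3)) : IsGenericTriple (α ∘ σ) where
  toIsAngleTriple := h.toIsAngleTriple.comp_perm σ
  coeff_eq N n hN hn hsum k := by
    have hsum' : ∑ k, (N (σ.symm k) : ℝ) * α k = n * π := by
      rw [← hsum, ← Equiv.sum_comp σ]
      simp
    simpa using h.coeff_eq (N ∘ σ.symm) n (fun j => hN _) hn hsum' (σ k)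

lemma coeff_eq_zero (h : IsGenericTriple α) {j k : Fin 3} (hjk : j ≠ k) {m m' n : ℤ}
    (hm : |m| ≤ 5) (hm' : |m'| ≤ 5) (hn : |n| ≤ 5) (heq : m * α j + m' * α k = n * π) : m = 0 := by
  have hcoeff := h.coeff_eq (fun i => (if i = j then m else 0) + if i = k then m' else 0) n
    (fun i => by split_ifs <;> simp_all) hn (by simp [add_mul, sum_add_distrib, heq])
  obtain ⟨i, hij, hik⟩ : ∃ i, i ≠ j ∧ i ≠ k := by clear * -; decide +revert
  have hn0 : 0 = n := by simpa [hij, hik] using hcoeff i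
  simpa [hjk, ← hn0] using hcoeff j

lemma injective (h : IsGenericTriple α) : Function.Injective α := by
  intro j k hjk
  by_contra hne
  exact one_ne_zero <| h.coeff_eq_zero (m := 1) (m' := -1) (n := 0) hne (by simp) (by simp)
    (by simp) (by simp [hjk])

lemma two_mul_ne_pi (h : IsGenericTriple α) (k : Fin 3) : 2 * α k ≠ π := by
  intro heq
  have hne : k ≠ k + 1 := by fin_cases k <;> decide
  exact two_ne_zero <| h.coeff_eq_zero (m := 2) (m' := 0) (n := 1) hne (by simp) (by simp)
    (by simp) (by simpa using heq)

lemma ne_two_mul (h : IsGenericTriple α) {j k : Fin 3} (hjk : j ≠ k) : α j ≠ 2 * α k := by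
  intro heq
  exact one_ne_zero <| h.coeff_eq_zero (m := 1) (m' := -2) (n := 0) hjk (by simp) (by simp)
    (by simp) (by simp [heq])

section SignedSum

variable {ι : Type*} [Fintype ι] {κ : ι → Fin 3} {s : ι → ℤˣ} {n : ℤ}

lemma sum_fiber_units_eq (h : IsGenericTriple α) (hcard : Fintype.card ι ≤ 5)
    (hsum : ∑ i, (s i : ℤ) * α (κ i) = n * π) (k : Fin 3) :
    ∑ i with κ i = k, (s i : ℤ) = n := by
  have hcard' : (Fintype.card ι : ℤ) ≤ 5 := mod_cast hcard
  have habs (i : ι) : |(s i : ℤ)| = 1 := Int.isUnit_iff_abs_eq.1 (s i).isUnit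
  refine h.coeff_eq (fun k => ∑ i with κ i = k, (s i : ℤ)) n (fun k => ?_) ?_ ?_ k
  · calc |∑ i with κ i = k, (s i : ℤ)| ≤ ∑ i with κ i = k, |(s i : ℤ)| := abs_sum_le_sum_abs _ _
      _ ≤ Fintype.card ι := by simpa [habs] using card_le_univ _
      _ ≤ 5 := hcard'
  · have hπ : |(n : ℝ)| * π ≤ Fintype.card ι * π := by
      calc |(n : ℝ)| * π = |∑ i, (s i : ℤ) * α (κ i)| := by rw [hsum, abs_mul, abs_of_pos pi_pos]
        _ ≤ ∑ i, |((s i : ℤ) : ℝ) * α (κ i)| := abs_sum_le_sum_abs _ _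
        _ = ∑ i, α (κ i) := by
          simp only [abs_mul, ← Int.cast_abs, habs, Int.cast_one, one_mul, abs_of_pos (h.pos _)]
        _ ≤ ∑ _i : ι, π := sum_le_sum fun i _ => (h.lt_pi _).le
        _ = Fintype.card ι * π := by simp
    have hle : |n| ≤ (Fintype.card ι : ℤ) := by
      exact_mod_cast (mul_le_mul_iff_left₀ pi_pos).1 hπ
    exact hle.trans hcard'
  · simp only [Int.cast_sum, sum_mul, ← hsum]
    rw [← sum_fiberwise univ κ fun i => ((s i : ℤ) : ℝ) * α (κ i)]
    exact sum_congr rfl fun k _ => sum_congr rfl fun i hi => by rw [(mem_filter.1 hi).2]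

lemma sum_units_eq_three_mul (h : IsGenericTriple α) (hcard : Fintype.card ι ≤ 5)
    (hsum : ∑ i, (s i : ℤ) * α (κ i) = n * π) : ∑ i, (s i : ℤ) = 3 * n := by
  rw [← sum_fiberwise univ κ, sum_congr rfl fun k _ => h.sum_fiber_units_eq hcard hsum k]
  simp

end SignedSum

end IsGenericTriple

end AngleTriple

section EdgeRatio

/-- In a triangle `p₀p₁p₂` with angles `β`, the quotient of consecutive edges
`(p₂ - p₁) / (p₁ - p₀)` as a complex number, where the sign `s` records the orientation. -/
def edgeRatio (s : ℤˣ) (β : Fin 3 → ℝ) : ℂ :=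
  -(sin (β 0) / sin (β 2) : ℝ) * Complex.exp (((s : ℤ) * β 1 : ℝ) * Complex.I)

variable (s t : ℤˣ) {β γ : Fin 3 → ℝ}

lemma conj_edgeRatio (β : Fin 3 → ℝ) : conj (edgeRatio s β) = edgeRatio (-s) β := by
  simp only [edgeRatio, map_mul, map_neg, Complex.conj_ofReal, ← Complex.exp_conj, Complex.conj_I,
    Units.val_neg, Int.cast_neg, neg_mul, mul_neg, Complex.ofReal_neg]

lemma edgeRatio_inv (β : Fin 3 → ℝ) : (edgeRatio s β)⁻¹ = edgeRatio (-s) (β ∘ Fin.rev) := by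
  simp [edgeRatio, ← Complex.exp_neg, Fin.rev, mul_comm]

lemma norm_edgeRatio (hβ : IsAngleTriple β) : ‖edgeRatio s β‖ = sin (β 0) / sin (β 2) := by
  rw [edgeRatio, norm_mul, Complex.norm_exp_ofReal_mul_I, mul_one, norm_neg, Complex.norm_real,
    Real.norm_of_nonneg (div_pos (hβ.sin_pos 0) (hβ.sin_pos 2)).le]

lemma one_add_edgeRatio (hβ : IsAngleTriple β) :
    1 + edgeRatio s β =
      (sin (β 1) / sin (β 2) : ℝ) * Complex.exp ((-((s : ℤ) * β 0) : ℝ) * Complex.I) := by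
  have hsum := hβ.sum_eq_pi
  rw [Fin.sum_univ_three] at hsum
  have hβ₂ : sin (β 2) = sin (β 0) * cos (β 1) + cos (β 0) * sin (β 1) := by
    rw [← sin_add, ← sin_pi_sub, ← hsum]
    ring_nf
  have hβ₂' : (sin (β 2) : ℂ) = sin (β 0) * cos (β 1) + cos (β 0) * sin (β 1) := mod_cast hβ₂
  have hsin : (sin (β 2) : ℂ) ≠ 0 := mod_cast (hβ.sin_pos 2).ne'
  rcases Int.units_eq_one_or s with rfl | rfl <;>
  · simp only [edgeRatio, Units.val_one, Units.val_neg, Int.cast_one, Int.cast_neg, one_mul,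
      neg_one_mul, neg_neg, Complex.exp_mul_I, Complex.ofReal_div, Complex.ofReal_neg,
      Complex.cos_neg, Complex.sin_neg, ← Complex.ofReal_cos, ← Complex.ofReal_sin]
    field_simp
    linear_combination hβ₂'

lemma im_one_add_edgeRatio_mul_edgeRatio (hγ : IsAngleTriple γ) :
    ((1 + edgeRatio t γ) * edgeRatio s β).im =
      -(sin (γ 1) / sin (γ 2) * (sin (β 0) / sin (β 2)) *
        sin ((s : ℤ) * β 1 - (t : ℤ) * γ 0)) := by
  have hmul : (1 + edgeRatio t γ) * edgeRatio s β =
      (-(sin (γ 1) / sin (γ 2) * (sin (β 0) / sin (β 2))) : ℝ) *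
        Complex.exp (((s : ℤ) * β 1 - (t : ℤ) * γ 0 : ℝ) * Complex.I) := by
    rw [one_add_edgeRatio t hγ, edgeRatio, sub_eq_neg_add, Complex.ofReal_add, add_mul,
      Complex.exp_add]
    push_cast
    ring
  rw [hmul, Complex.im_ofReal_mul, Complex.exp_ofReal_mul_I_im, neg_mul]

lemma prod_edgeRatio {ι : Type*} [Fintype ι] (s : ι → ℤˣ) (β : ι → Fin 3 → ℝ) :
    ∏ i, edgeRatio (s i) (β i) = (∏ i, -(sin (β i 0) / sin (β i 2)) : ℝ) *
      Complex.exp ((∑ i, (s i : ℤ) * β i 1 : ℝ) * Complex.I) := by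
  simp only [edgeRatio, prod_mul_distrib, Complex.ofReal_sum, sum_mul, Complex.exp_sum,
    Complex.ofReal_prod, Complex.ofReal_neg]

end EdgeRatio

section ClosedPentagon

/-- `ρ` is the cyclic sequence of quotients of consecutive edges of a closed pentagon: the edges
`1, ρ₀, ρ₀ρ₁, …` return to `1` after five steps and sum to `0`. -/
structure IsPentagonRatio (ρ : Fin 5 → ℂ) : Prop where
  prod_eq_one : ∏ i, ρ i = 1
  sum_eq_zero : 1 + ρ 0 + ρ 0 * ρ 1 + ρ 0 * ρ 1 * ρ 2 + ρ 0 * ρ 1 * ρ 2 * ρ 3 = 0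

namespace IsPentagonRatio

variable {ρ : Fin 5 → ℂ}

lemma ne_zero (h : IsPentagonRatio ρ) (i : Fin 5) : ρ i ≠ 0 := by
  have hprod : ∏ i, ρ i ≠ 0 := h.prod_eq_one ▸ one_ne_zero
  exact prod_ne_zero_iff.1 hprod i (mem_univ i)

lemma map_conj (h : IsPentagonRatio ρ) : IsPentagonRatio fun i => conj (ρ i) where
  prod_eq_one := by rw [← map_prod, h.prod_eq_one, map_one]
  sum_eq_zero := by simpa using congrArg (starRingEnd ℂ) h.sum_eq_zero

lemma rotate_one (h : IsPentagonRatio ρ) : IsPentagonRatio fun i => ρ (i + 1) where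
  prod_eq_one := (Equiv.prod_comp (Equiv.addRight (1 : Fin 5)) ρ).trans h.prod_eq_one
  sum_eq_zero := by
    have hprod := h.prod_eq_one
    rw [Fin.prod_univ_five] at hprod
    refine (mul_eq_zero.1 ?_).resolve_left (h.ne_zero 0)
    simp only [Fin.isValue, Fin.reduceAdd, zero_add]
    linear_combination h.sum_eq_zero + hprod

lemma rotate (h : IsPentagonRatio ρ) (j : Fin 5) : IsPentagonRatio fun i => ρ (i + j) := by
  suffices ∀ n : ℕ, IsPentagonRatio fun i => ρ (i + n • (1 : Fin 5)) by
    have hj : (j : ℕ) • (1 : Fin 5) = j := by clear * -; decide +revert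
    simpa only [hj] using this j
  intro n
  induction n with
  | zero => simpa using h
  | succ n ih => simpa only [succ_nsmul', add_assoc] using ih.rotate_one

lemma one_add_add_eq_zero (h : IsPentagonRatio ρ) :
    1 + (1 + ρ 1) * ρ 0 + (1 + (ρ 3)⁻¹) * (ρ 4)⁻¹ = 0 := by
  have h3 := h.ne_zero 3
  have h4 := h.ne_zero 4
  have hprod := h.prod_eq_one
  rw [Fin.prod_univ_five] at hprod
  field_simp
  linear_combination ρ 3 * ρ 4 * h.sum_eq_zero - (1 + ρ 3) * hprod

section

variable {s : Fin 5 → ℤˣ} {β : Fin 5 → Fin 3 → ℝ}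

lemma sin_sum_eq_zero (h : IsPentagonRatio fun i => edgeRatio (s i) (β i)) :
    sin (∑ i, (s i : ℤ) * β i 1) = 0 := by
  have hprod := h.prod_eq_one
  rw [prod_edgeRatio] at hprod
  have him := congrArg Complex.im hprod
  rw [Complex.im_ofReal_mul, Complex.exp_ofReal_mul_I_im, Complex.one_im, mul_eq_zero] at him
  refine him.resolve_left fun hzero => ?_
  simp [hzero] at hprod

lemma sum_log_sin_eq (h : IsPentagonRatio fun i => edgeRatio (s i) (β i))
    (hβ : ∀ i, IsAngleTriple (β i)) : ∑ i, log (sin (β i 0)) = ∑ i, log (sin (β i 2)) := by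
  have hnorm : ∏ i, sin (β i 0) / sin (β i 2) = 1 := by
    simpa only [norm_prod, norm_edgeRatio _ (hβ _), norm_one] using congrArg norm h.prod_eq_one
  have hsin (i : Fin 5) (k : Fin 3) : sin (β i k) ≠ 0 := ((hβ i).sin_pos k).ne'
  have hlog := congrArg log hnorm
  rw [log_prod fun i _ => div_ne_zero (hsin i 0) (hsin i 2), log_one] at hlog
  simpa only [log_div (hsin _ 0) (hsin _ 2), sum_sub_distrib, sub_eq_zero] using hlog

-- For a pentagon `x` this compares the two expressions of the altitude from `x (i + 3)` onto the
-- line `x i`, `x (i + 1)`, obtained from the two paths around the pentagon.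
lemma sin_relation (h : IsPentagonRatio fun i => edgeRatio (s i) (β i))
    (hβ : ∀ i, IsAngleTriple (β i)) (i : Fin 5) :
    sin (β (1 + i) 1) / sin (β (1 + i) 2) * (sin (β i 0) / sin (β i 2)) *
        sin ((s i : ℤ) * β i 1 - (s (1 + i) : ℤ) * β (1 + i) 0) =
      sin (β (3 + i) 1) / sin (β (3 + i) 0) * (sin (β (4 + i) 2) / sin (β (4 + i) 0)) *
        sin ((s (4 + i) : ℤ) * β (4 + i) 1 - (s (3 + i) : ℤ) * β (3 + i) 2) := by
  have hrev : IsAngleTriple (β (3 + i) ∘ Fin.rev) := (hβ (3 + i)).comp_perm Fin.revPerm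
  have him := congrArg Complex.im (h.rotate i).one_add_add_eq_zero
  simp only [zero_add, edgeRatio_inv, Complex.add_im, Complex.one_im,
    im_one_add_edgeRatio_mul_edgeRatio _ _ (hβ (1 + i)),
    im_one_add_edgeRatio_mul_edgeRatio _ _ hrev] at him
  have hneg : sin ((-s (4 + i) : ℤˣ) * β (4 + i) 1 - (-s (3 + i) : ℤˣ) * β (3 + i) 2) =
      -sin ((s (4 + i) : ℤ) * β (4 + i) 1 - (s (3 + i) : ℤ) * β (3 + i) 2) := by
    rw [← sin_neg]
    push_cast
    ring_nf
  have hrev' (γ : Fin 3 → ℝ) : (γ ∘ Fin.rev) 0 = γ 2 ∧ (γ ∘ Fin.rev) 1 = γ 1 ∧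
      (γ ∘ Fin.rev) 2 = γ 0 := ⟨rfl, rfl, rfl⟩
  simp only [hrev', hneg, Complex.zero_im] at him
  linear_combination -him

end

end IsPentagonRatio

end ClosedPentagon

section AngleOrder

lemma sign_eq_sign_of_mul_eq_mul {a b x y : ℝ} (ha : 0 < a) (hb : 0 < b) (h : a * x = b * y) :
    SignType.sign x = SignType.sign y := by
  simpa [sign_mul, sign_pos ha, sign_pos hb] using congrArg SignType.sign h

variable {α : Fin 3 → ℝ}

lemma sign_sin_sub_of_strictMono (hα : IsAngleTriple α) (hmono : StrictMono α) (p q : Fin 3) :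
    SignType.sign (sin (α p - α q)) =
      if p = q then 0 else if q < p then 1 else -1 := by
  have hp := hα.pos p
  have hq := hα.pos q
  have hp' := hα.lt_pi p
  have hq' := hα.lt_pi q
  rcases lt_trichotomy p q with h | rfl | h
  · rw [if_neg h.ne, if_neg h.asymm]
    exact sign_neg (sin_neg_of_neg_of_neg_pi_lt (by linarith [hmono h]) (by linarith))
  · simp
  · rw [if_neg h.ne', if_pos h]
    exact sign_pos (sin_pos_of_pos_of_lt_pi (by linarith [hmono h]) (by linarith))

lemma sign_sin_add_of_strictMono (hα : IsAngleTriple α) (hmono : StrictMono α) (p q : Fin 3) :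
    SignType.sign (sin (α p + α q)) =
      if p = 2 ∧ q = 2 then SignType.sign (sin (α 2 + α 2)) else 1 := by
  by_cases hpq : p = 2 ∧ q = 2
  · rw [if_pos hpq, hpq.1, hpq.2]
  · rw [if_neg hpq]
    have hlt : α p + α q < π := by
      rcases eq_or_ne p q with rfl | hne
      · have hp : p ≠ 2 := fun h => hpq ⟨h, h⟩
        have hlt : α p < α 2 := hmono (lt_of_le_of_ne (Fin.le_last p) hp)
        linarith [hα.add_lt_pi hp]
      · exact hα.add_lt_pi hne
    exact sign_pos (sin_pos_of_pos_of_lt_pi (add_pos (hα.pos p) (hα.pos q)) hlt)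

/-- The sign of `sin (s * α p - t * α q)` for an increasing angle triple `α`, where `o` is the sign
of `sin (α 2 + α 2)`, which the order does not determine since the largest angle may be obtuse. -/
def signSin (o : SignType) (s t : ℤˣ) (p q : Fin 3) : SignType :=
  (if s = 1 then 1 else -1) *
    if s = t then if p = q then 0 else if q < p then 1 else -1
    else if p = 2 ∧ q = 2 then o else 1

lemma sign_sin_of_strictMono (hα : IsAngleTriple α) (hmono : StrictMono α) (s t : ℤˣ)
    (p q : Fin 3) : SignType.sign (sin ((s : ℤ) * α p - (t : ℤ) * α q)) =
      signSin (SignType.sign (sin (α 2 + α 2))) s t p q := by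
  rw [signSin, ← sign_sin_sub_of_strictMono hα hmono, ← sign_sin_add_of_strictMono hα hmono]
  rcases Int.units_eq_one_or s with rfl | rfl <;> rcases Int.units_eq_one_or t with rfl | rfl
  · simp
  · simp
  · simp [← Left.sign_neg, ← sin_neg, sub_eq_add_neg, add_comm]
  · simp [← Left.sign_neg, ← sin_neg, sub_eq_add_neg, add_comm]

lemma sin_add_self_ne_zero (hα : IsGenericTriple α) (k : Fin 3) : sin (α k + α k) ≠ 0 := by
  have h0 := hα.pos k
  have hπ := hα.lt_pi k
  intro h
  obtain ⟨n, hn⟩ := sin_eq_zero_iff.1 h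
  have hn0 : (0 : ℝ) < n := by nlinarith [pi_pos]
  have hn2 : (n : ℝ) < 2 := by nlinarith [pi_pos]
  obtain rfl : n = 1 := by
    have : 0 < n := mod_cast hn0
    have : n < 2 := mod_cast hn2
    omega
  exact hα.two_mul_ne_pi k (by rw [two_mul, ← hn, Int.cast_one, one_mul])

lemma strictMono_log_sin (hα : IsAngleTriple α) (hmono : StrictMono α) :
    StrictMono fun k => log (sin (α k)) := by
  intro p q hpq
  refine log_lt_log (hα.sin_pos p) ?_
  have hdiff : sin (α q) - sin (α p) = 2 * sin ((α q - α p) / 2) * cos ((α q + α p) / 2) :=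
    sin_sub_sin _ _
  have hsin : 0 < sin ((α q - α p) / 2) :=
    sin_pos_of_pos_of_lt_pi (by linarith [hmono hpq]) (by linarith [hα.lt_pi q, hα.pos p, pi_pos])
  have hcos : 0 < cos ((α q + α p) / 2) :=
    cos_pos_of_mem_Ioo ⟨by linarith [hα.pos q, hα.pos p, pi_pos], by
      linarith [hα.add_lt_pi hpq.ne']⟩
  have : 0 < 2 * sin ((α q - α p) / 2) * cos ((α q + α p) / 2) := by positivity
  linarith

/-- The values of `f` stochastically dominate those of `g`, expressed by comparing how often the
extreme values `2` and `0` are taken. Any increasing weight then has the larger sum along `f`. -/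
def StochDominates {ι : Type*} [Fintype ι] (f g : ι → Fin 3) : Prop :=
  #{i | g i = 2} ≤ #{i | f i = 2} ∧ #{i | f i = 0} ≤ #{i | g i = 0}

instance {ι : Type*} [Fintype ι] (f g : ι → Fin 3) : Decidable (StochDominates f g) :=
  inferInstanceAs (Decidable (_ ∧ _))

lemma StochDominates.symm_of_sum_eq {ι : Type*} [Fintype ι] {f g : ι → Fin 3} {w : Fin 3 → ℝ}
    (h : StochDominates f g) (hw : StrictMono w) (hsum : ∑ i, w (f i) = ∑ i, w (g i)) :
    StochDominates g f := by
  have hw01 : 0 < w 1 - w 0 := sub_pos.2 (hw (by decide))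
  have hw12 : 0 < w 2 - w 1 := sub_pos.2 (hw (by decide))
  have hexpand (f : ι → Fin 3) : ∑ i, w (f i) =
      Fintype.card ι * w 1 + (w 2 - w 1) * #{i | f i = 2} - (w 1 - w 0) * #{i | f i = 0} := by
    have hterm (k : Fin 3) : w k =
        w 1 + (w 2 - w 1) * (if k = 2 then 1 else 0) - (w 1 - w 0) * (if k = 0 then 1 else 0) := by
      fin_cases k <;> simp
    rw [sum_congr rfl fun i _ => hterm (f i), sum_sub_distrib, sum_add_distrib, ← mul_sum,
      ← mul_sum, sum_boole, sum_boole]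
    simp
  rw [hexpand f, hexpand g] at hsum
  have h2 : (#{i | g i = 2} : ℝ) ≤ #{i | f i = 2} := mod_cast h.1
  have h0 : (#{i | f i = 0} : ℝ) ≤ #{i | g i = 0} := mod_cast h.2
  constructor
  · have : (#{i | f i = 2} : ℝ) ≤ #{i | g i = 2} := by nlinarith
    exact_mod_cast this
  · have : (#{i | g i = 0} : ℝ) ≤ #{i | f i = 0} := by nlinarith
    exact_mod_cast this

end AngleOrder

section Combinatorics

lemma exists_rotation_of_three_dvd_sum (s : Fin 5 → ℤˣ) (h : (3 : ℤ) ∣ ∑ i, (s i : ℤ)) :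
    ∃ (u : ℤˣ) (j : Fin 5), ∀ i, s (i + j) = if i = 0 then u else -u := by
  decide +revert

/-- The orientations of the triangles of a pentagon of which exactly triangle `0` is positive. -/
def pentagonOrientation (i : Fin 5) : ℤˣ := if i = 0 then 1 else -1

/-- The sign conditions which `IsPentagonRatio.sin_relation` imposes on a pentagon oriented by
`pentagonOrientation` whose triangle `i` has angles `α ∘ σ i`, where `α` is increasing. -/
def OrderCompatible (o : SignType) (σ : Fin 5 → Fin 3 → Fin 3) : Prop :=
  ∀ i, signSin o (pentagonOrientation i) (pentagonOrientation (1 + i)) (σ i 1) (σ (1 + i) 0) =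
    signSin o (pentagonOrientation (4 + i)) (pentagonOrientation (3 + i)) (σ (4 + i) 1)
      (σ (3 + i) 2)

instance (o : SignType) (σ : Fin 5 → Fin 3 → Fin 3) : Decidable (OrderCompatible o σ) :=
  inferInstanceAs (Decidable (∀ _, _))

/-- The only labelling, up to reflection, of the angles of the five triangles by their ranks which
survives the sign conditions. -/
def pentagonLabelling : Fin 5 → Fin 3 → Fin 3 :=
  ![![2, 1, 0], ![2, 0, 1], ![1, 2, 0], ![0, 1, 2], ![0, 1, 2]]

lemma perm_fin_three_eq_affine (σ : Equiv.Perm (Fin 3)) :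
    ⇑σ = fun k => σ 1 + (1 - k) * (σ 0 - σ 1) := by
  decide +revert

-- Writing a permutation of `Fin 3` as an affine map `k ↦ b + (1 - k) * u` lets the finite check
-- discard most middle values `b` before it ranges over the slopes `u`.
lemma affine_labelling_eq_of_orderCompatible : ∀ b : Fin 5 → Fin 3,
    (∀ k, ∑ i with b i = k, (pentagonOrientation i : ℤ) = -1) →
    ∀ u : Fin 5 → Fin 3, (∀ i, u i ≠ 0) → ∀ o : SignType, o ≠ 0 →
    OrderCompatible o (fun i k => b i + (1 - k) * u i) →
    (StochDominates (fun i => b i + (1 - 0) * u i) (fun i => b i + (1 - 2) * u i) ↔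
      StochDominates (fun i => b i + (1 - 2) * u i) (fun i => b i + (1 - 0) * u i)) →
    (∀ i k, b i + (1 - k) * u i = pentagonLabelling i k) ∨
      ∀ i k, b i + (1 - k) * u i = pentagonLabelling (-i) (Fin.rev k) := by
  simp only [← FinVec.forall_iff]
  dsimp only [FinVec.Forall]
  decide +kernel

lemma labelling_eq_of_orderCompatible {σ : Fin 5 → Equiv.Perm (Fin 3)} {o : SignType} (ho : o ≠ 0)
    (hcount : ∀ k, ∑ i with σ i 1 = k, (pentagonOrientation i : ℤ) = -1)
    (hcompat : OrderCompatible o fun i => σ i)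
    (hdom : StochDominates (fun i => σ i 0) (fun i => σ i 2) ↔
      StochDominates (fun i => σ i 2) (fun i => σ i 0)) :
    (∀ i k, σ i k = pentagonLabelling i k) ∨
      ∀ i k, σ i k = pentagonLabelling (-i) (Fin.rev k) := by
  have happly (i : Fin 5) (k : Fin 3) : σ i 1 + (1 - k) * (σ i 0 - σ i 1) = σ i k :=
    (congrFun (perm_fin_three_eq_affine (σ i)) k).symm
  have hne (i : Fin 5) : σ i 0 - σ i 1 ≠ 0 := sub_ne_zero.2 ((σ i).injective.ne (by decide))
  have h := affine_labelling_eq_of_orderCompatible (fun i => σ i 1) hcount _ hne o ho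
  simp only [happly] at h
  exact h hcompat hdom

end Combinatorics

section NoPentagon

variable {α : Fin 3 → ℝ}

lemma eq_two_mul_of_sin_mul_sin_two_mul_eq {x y : ℝ} (hx : 0 < x) (hxy : x < y) (hπ : x + y < π)
    (h : sin x * sin (2 * x) = sin y * sin (y - x)) : y = 2 * x := by
  have hfactor : sin (x + y) * sin (2 * x - y) = 0 := by
    have hid : sin x * sin (2 * x) - sin y * sin (y - x) = sin (x + y) * sin (2 * x - y) := by
      simp only [sin_add, sin_sub, sin_two_mul, cos_two_mul]
      linear_combination 2 * cos x * sin y ^ 2 * sin_sq_add_cos_sq x -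
        2 * sin x ^ 2 * cos x * sin_sq_add_cos_sq y
    rw [← hid, h, sub_self]
  have hadd : sin (x + y) ≠ 0 := (sin_pos_of_pos_of_lt_pi (by linarith) hπ).ne'
  have hsub := (mul_eq_zero.1 hfactor).resolve_left hadd
  rw [sin_eq_zero_iff_of_lt_of_lt (by linarith) (by linarith)] at hsub
  linarith

lemma sin_mul_sin_two_mul_eq_of_labelling {σ : Fin 5 → Equiv.Perm (Fin 3)} (hα : IsAngleTriple α)
    (h : IsPentagonRatio fun i => edgeRatio (pentagonOrientation i) (α ∘ σ i))
    (hσ : (∀ i k, σ i k = pentagonLabelling i k) ∨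
      ∀ i k, σ i k = pentagonLabelling (-i) (Fin.rev k)) :
    sin (α 0) * sin (2 * α 0) = sin (α 2) * sin (α 2 - α 0) := by
  have h0 := hα.sin_pos 0
  have h1 := hα.sin_pos 1
  have h2 := hα.sin_pos 2
  have hrel := h.sin_relation fun i => hα.comp_perm (σ i)
  have hkey : sin (α 1) / sin (α 2) * (sin (α 1) / sin (α 0)) * sin (-α 2 + α 0) =
      sin (α 1) / sin (α 2) * (sin (α 1) / sin (α 2)) * sin (-α 0 - α 0) := by
    rcases hσ with hσ | hσ
    · simpa [hσ, pentagonLabelling, pentagonOrientation] using hrel 2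
    · simpa [hσ, pentagonLabelling, pentagonOrientation] using (hrel 4).symm
  rw [show -α 2 + α 0 = -(α 2 - α 0) by ring, show -α 0 - α 0 = -(2 * α 0) by ring, sin_neg,
    sin_neg] at hkey
  rw [mul_comm 2 (α 0)] at hkey ⊢
  field_simp at hkey
  linear_combination hkey

lemma IsPentagonRatio.orderCompatible {σ : Fin 5 → Equiv.Perm (Fin 3)}
    (h : IsPentagonRatio fun i => edgeRatio (pentagonOrientation i) (α ∘ σ i))
    (hα : IsAngleTriple α) (hmono : StrictMono α) :
    OrderCompatible (SignType.sign (sin (α 2 + α 2))) fun i => σ i := by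
  intro i
  simp only [← sign_sin_of_strictMono hα hmono]
  have hdiv (j k : Fin 3) : 0 < sin (α j) / sin (α k) := div_pos (hα.sin_pos j) (hα.sin_pos k)
  exact sign_eq_sign_of_mul_eq_mul (mul_pos (hdiv _ _) (hdiv _ _)) (mul_pos (hdiv _ _) (hdiv _ _))
    (h.sin_relation (fun j => hα.comp_perm (σ j)) i)

lemma not_isPentagonRatio_of_strictMono (hα : IsGenericTriple α) (hmono : StrictMono α)
    (σ : Fin 5 → Equiv.Perm (Fin 3)) :
    ¬ IsPentagonRatio fun i => edgeRatio (pentagonOrientation i) (α ∘ σ i) := by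
  intro h
  have hβ (i : Fin 5) : IsAngleTriple (α ∘ σ i) := hα.toIsAngleTriple.comp_perm (σ i)
  obtain ⟨n, hn⟩ := sin_eq_zero_iff.1 h.sin_sum_eq_zero
  have hcount := hα.sum_fiber_units_eq (by simp) hn.symm
  have hn3 := hα.sum_units_eq_three_mul (by simp) hn.symm
  obtain rfl : n = -1 := by
    have : ∑ i, (pentagonOrientation i : ℤ) = -3 := by decide
    omega
  have hcompat := h.orderCompatible hα.toIsAngleTriple hmono
  have hlog := strictMono_log_sin hα.toIsAngleTriple hmono
  have hsum := h.sum_log_sin_eq hβ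
  have hdom : StochDominates (fun i => σ i 0) (fun i => σ i 2) ↔
      StochDominates (fun i => σ i 2) (fun i => σ i 0) :=
    ⟨fun hd => hd.symm_of_sum_eq hlog hsum, fun hd => hd.symm_of_sum_eq hlog hsum.symm⟩
  have ho : SignType.sign (sin (α 2 + α 2)) ≠ 0 := sign_ne_zero.2 (sin_add_self_ne_zero hα 2)
  have hσ := labelling_eq_of_orderCompatible ho hcount hcompat hdom
  have hne : (2 : Fin 3) ≠ 0 := by decide
  refine hα.ne_two_mul hne (eq_two_mul_of_sin_mul_sin_two_mul_eq (hα.pos 0) (hmono (by decide))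
    (hα.add_lt_pi hne.symm) ?_)
  exact sin_mul_sin_two_mul_eq_of_labelling hα.toIsAngleTriple h hσ

lemma not_isPentagonRatio_pentagonOrientation (hα : IsGenericTriple α)
    (σ : Fin 5 → Equiv.Perm (Fin 3)) :
    ¬ IsPentagonRatio fun i => edgeRatio (pentagonOrientation i) (α ∘ σ i) := by
  have hmono : StrictMono (α ∘ Tuple.sort α) :=
    (Tuple.monotone_sort α).strictMono_of_injective (hα.injective.comp (Tuple.sort α).injective)
  have hσ (i : Fin 5) : α ∘ σ i = (α ∘ Tuple.sort α) ∘ ((Tuple.sort α)⁻¹ * σ i) := by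
    ext k
    simp
  simpa only [hσ] using not_isPentagonRatio_of_strictMono (hα.comp_perm _) hmono _

lemma not_isPentagonRatio (hα : IsGenericTriple α) (s : Fin 5 → ℤˣ)
    (σ : Fin 5 → Equiv.Perm (Fin 3)) :
    ¬ IsPentagonRatio fun i => edgeRatio (s i) (α ∘ σ i) := by
  intro h
  obtain ⟨n, hn⟩ := sin_eq_zero_iff.1 h.sin_sum_eq_zero
  have hs := hα.sum_units_eq_three_mul (by simp) hn.symm
  obtain ⟨u, j, hu⟩ := exists_rotation_of_three_dvd_sum s ⟨n, hs⟩
  have hrot := h.rotate j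
  simp only [hu] at hrot
  refine not_isPentagonRatio_pentagonOrientation hα (fun i => σ (i + j)) ?_
  rcases Int.units_eq_one_or u with rfl | rfl
  · exact hrot
  · simpa [conj_edgeRatio, neg_ite, pentagonOrientation, apply_ite] using hrot.map_conj

end NoPentagon

section Geometry

lemma IsTriangle.injective {p : Fin 3 → Plane} (hp : IsTriangle p) : Function.Injective p :=
  (affineIndependent_iff_not_collinear.2 hp).injective

lemma IsTriangle.isAngleTriple {p : Fin 3 → Plane} (hp : IsTriangle p) :
    IsAngleTriple (triAngle p) where
  pos k := by
    have hrange : Set.range p = {p (k + 1), p k, p (k + 2)} := by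
      ext x
      fin_cases k <;> simp [Fin.exists_fin_succ, eq_comm] <;> tauto
    refine (angle_nonneg _ _ _).lt_of_ne' fun hzero => hp ?_
    rw [hrange]
    exact collinear_of_angle_eq_zero hzero
  sum_eq_pi := by
    have hsum := angle_add_angle_add_angle_eq_pi (p₁ := p 1) (p₂ := p 0) (p 2)
      (hp.injective.ne (by decide))
    rw [Fin.sum_univ_three]
    change ∠ (p 1) (p 0) (p 2) + ∠ (p 2) (p 1) (p 0) + ∠ (p 0) (p 2) (p 1) = π
    linarith

/-- The identification of the plane with `ℂ`. -/
def planeToComplex : Plane ≃ₗᵢ[ℝ] ℂ := Complex.orthonormalBasisOneI.repr.symm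

lemma exists_units_mul_abs (x : ℝ) : ∃ s : ℤˣ, x = (s : ℤ) * |x| := by
  rcases abs_choice x with h | h
  · exact ⟨1, by simp [h]⟩
  · exact ⟨-1, by simp [h]⟩

lemma exists_units_div_eq_exp_angle {a b c : Plane} (ha : a ≠ b) (hc : c ≠ b) : ∃ s : ℤˣ,
    (planeToComplex a - planeToComplex b) / (planeToComplex c - planeToComplex b) =
      (dist a b / dist c b : ℝ) * Complex.exp (((s : ℤ) * ∠ a b c : ℝ) * Complex.I) := by
  have hangle : ∠ a b c =
      |((planeToComplex a - planeToComplex b) / (planeToComplex c - planeToComplex b)).arg| := by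
    rw [← Complex.angle_eq_abs_arg (sub_ne_zero.2 (planeToComplex.injective.ne ha))
      (sub_ne_zero.2 (planeToComplex.injective.ne hc)), ← map_sub, ← map_sub]
    exact (planeToComplex.toLinearIsometry.angle_map _ _).symm
  have hnorm : dist a b / dist c b =
      ‖(planeToComplex a - planeToComplex b) / (planeToComplex c - planeToComplex b)‖ := by
    simp only [norm_div, ← dist_eq_norm, planeToComplex.dist_map]
  obtain ⟨s, hs⟩ := exists_units_mul_abs
    ((planeToComplex a - planeToComplex b) / (planeToComplex c - planeToComplex b)).arg
  exact ⟨s, by rw [hnorm, hangle, ← hs, Complex.norm_mul_exp_arg_mul_I]⟩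

lemma exists_units_exp_sum_angle_eq_one {n : ℕ} [NeZero n] {x : Fin n → Plane} {p : Plane}
    (hx : ∀ i, x i ≠ p) : ∃ s : Fin n → ℤˣ,
      Complex.exp ((∑ i, (s i : ℤ) * ∠ (x i) p (x (i + 1)) : ℝ) * Complex.I) = 1 := by
  choose s hs using fun i => exists_units_div_eq_exp_angle (hx i) (hx (i + 1))
  refine ⟨s, ?_⟩
  have hquot (f : Fin n → ℂ) (hf : ∀ i, f i ≠ 0) : ∏ i, f i / f (i + 1) = 1 := by
    have hshift : ∏ i, f (i + 1) = ∏ i, f i := Equiv.prod_comp (Equiv.addRight (1 : Fin n)) f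
    rw [prod_div_distrib, hshift]
    exact div_self (prod_ne_zero_iff.2 fun i _ => hf i)
  have hdist : ∏ i, ((dist (x i) p / dist (x (i + 1)) p : ℝ) : ℂ) = 1 := by
    simpa using hquot (fun i => dist (x i) p) fun i => mod_cast dist_ne_zero.2 (hx i)
  have hprod := hquot (fun i => planeToComplex (x i) - planeToComplex p)
    fun i => sub_ne_zero.2 (planeToComplex.injective.ne (hx i))
  simp only [hs, prod_mul_distrib, hdist, one_mul] at hprod
  rw [Complex.ofReal_sum, sum_mul, Complex.exp_sum, hprod]

lemma IsTriangle.exists_sub_eq_edgeRatio_mul {p : Fin 3 → Plane} (hp : IsTriangle p) :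
    ∃ s : ℤˣ, planeToComplex (p 2) - planeToComplex (p 1) =
      edgeRatio s (triAngle p) * (planeToComplex (p 1) - planeToComplex (p 0)) := by
  have h01 : p 0 ≠ p 1 := hp.injective.ne (by decide)
  have h21 : p 2 ≠ p 1 := hp.injective.ne (by decide)
  obtain ⟨s, hs⟩ := exists_units_div_eq_exp_angle h21 h01
  have hsine : dist (p 2) (p 1) / dist (p 0) (p 1) =
      sin (triAngle p 0) / sin (triAngle p 2) := by
    rw [div_eq_div_iff (dist_ne_zero.2 h01) (hp.isAngleTriple.sin_pos 2).ne']
    have hlaw := law_sin (p 2) (p 0) (p 1)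
    rw [angle_comm (p 2) (p 0) (p 1), angle_comm (p 1) (p 2) (p 0), dist_comm (p 1) (p 2)] at hlaw
    change _ * sin (∠ (p 0) (p 2) (p 1)) = sin (∠ (p 1) (p 0) (p 2)) * _
    linarith
  refine ⟨s, ?_⟩
  rw [div_eq_iff (sub_ne_zero.2 (planeToComplex.injective.ne h01)), hsine] at hs
  rw [hs, edgeRatio]
  change _ * Complex.exp (((s : ℤ) * triAngle p 1 : ℝ) * Complex.I) * _ = _
  ring

lemma isPentagonRatio_of_edges {e ρ : Fin 5 → ℂ} (he : e 0 ≠ 0)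
    (hstep : ∀ i, e (i + 1) = ρ i * e i) (hsum : ∑ i, e i = 0) : IsPentagonRatio ρ := by
  have h1 : e 1 = ρ 0 * e 0 := hstep 0
  have h2 : e 2 = ρ 1 * e 1 := hstep 1
  have h3 : e 3 = ρ 2 * e 2 := hstep 2
  have h4 : e 4 = ρ 3 * e 3 := hstep 3
  have h0 : e 0 = ρ 4 * e 4 := hstep 4
  rw [h1] at h2
  rw [h2] at h3
  rw [h3] at h4
  rw [h4] at h0
  constructor
  · rw [Fin.prod_univ_five]
    refine mul_right_cancel₀ he ?_
    linear_combination -h0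
  · rw [Fin.sum_univ_five] at hsum
    refine (mul_eq_zero.1 ?_).resolve_right he
    linear_combination hsum - h1 - h2 - h3 - h4

lemma exists_isPentagonRatio_of_isTriangle {x : Fin 5 → Plane}
    (hx : ∀ i, IsTriangle ![x i, x (i + 1), x (i + 2)]) : ∃ s : Fin 5 → ℤˣ,
      IsPentagonRatio fun i => edgeRatio (s i) (triAngle ![x i, x (i + 1), x (i + 2)]) := by
  choose s hs using fun i => (hx i).exists_sub_eq_edgeRatio_mul
  refine ⟨s, isPentagonRatio_of_edges
    (e := fun i => planeToComplex (x (i + 1)) - planeToComplex (x i)) ?_ (fun i => ?_) ?_⟩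
  · have hne : x 1 ≠ x 0 := (hx 0).injective.ne (a₁ := 1) (a₂ := 0) (by decide)
    exact sub_ne_zero.2 (planeToComplex.injective.ne hne)
  · rw [add_assoc]
    exact hs i
  · rw [sum_sub_distrib, sub_eq_zero]
    exact Equiv.sum_comp (Equiv.addRight (1 : Fin 5)) fun i => planeToComplex (x i)

end Geometry

section Perturbation

lemma eventually_forall_dist_lt {X : Type*} [PseudoMetricSpace X] {x₀ : X} {P : X → Prop}
    (h : ∀ᶠ x in 𝓝 x₀, P x) : ∀ᶠ ε in 𝓝[>] (0 : ℝ), ∀ x, dist x x₀ < ε → P x := by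
  obtain ⟨δ, hδ, hP⟩ := Metric.eventually_nhds_iff.1 h
  filter_upwards [Ioo_mem_nhdsGT hδ] with ε hε x hx
  exact hP (hx.trans hε.2)

lemma isClosed_setOf_isPentagonRatio : IsClosed {ρ | IsPentagonRatio ρ} := by
  have hset : {ρ | IsPentagonRatio ρ} = {ρ : Fin 5 → ℂ | ∏ i, ρ i = 1} ∩
      {ρ | 1 + ρ 0 + ρ 0 * ρ 1 + ρ 0 * ρ 1 * ρ 2 + ρ 0 * ρ 1 * ρ 2 * ρ 3 = 0} :=
    Set.ext fun ρ => ⟨fun h => ⟨h.1, h.2⟩, fun h => ⟨h.1, h.2⟩⟩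
  rw [hset]
  exact (isClosed_eq (by fun_prop) continuous_const).inter
    (isClosed_eq (by fun_prop) continuous_const)

lemma continuousAt_edgeRatio (s : ℤˣ) {β : Fin 3 → ℝ} (hβ : sin (β 2) ≠ 0) :
    ContinuousAt (edgeRatio s) β := by
  have hquot : ContinuousAt (fun β : Fin 3 → ℝ => sin (β 0) / sin (β 2)) β :=
    (by fun_prop : Continuous fun β : Fin 3 → ℝ => sin (β 0)).continuousAt.div
      (by fun_prop : Continuous fun β : Fin 3 → ℝ => sin (β 2)).continuousAt hβ
  have hexp : Continuous fun β : Fin 3 → ℝ =>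
      Complex.exp (((s : ℤ) * β 1 : ℝ) * Complex.I) := by fun_prop
  exact (Complex.continuous_ofReal.continuousAt.comp hquot).neg.mul hexp.continuousAt

variable {α : Fin 3 → ℝ}

lemma odd_sum_units {ι : Type*} [Fintype ι] (hodd : Odd (Fintype.card ι)) (s : ι → ℤˣ) :
    Odd (∑ i, (s i : ℤ)) := by
  have heven : Even (∑ i, ((s i : ℤ) - 1)) := even_sum _ fun i _ => by
    rcases Int.units_eq_one_or (s i) with h | h <;> rw [h] <;> decide
  have hcast : ∑ i, (s i : ℤ) = ∑ i, ((s i : ℤ) - 1) + Fintype.card ι := by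
    simp [sum_sub_distrib]
  rw [hcast]
  exact heven.add_odd (mod_cast hodd)

lemma exp_sum_units_mul_ne_one {ι : Type*} [Fintype ι] (hα : IsGenericTriple α)
    (hcard : Fintype.card ι ≤ 5) (hodd : Odd (Fintype.card ι)) (s : ι → ℤˣ) (κ : ι → Fin 3) :
    Complex.exp ((∑ i, (s i : ℤ) * α (κ i) : ℝ) * Complex.I) ≠ 1 := by
  intro h
  obtain ⟨n, hn⟩ := Complex.exp_eq_one_iff.1 h
  have hsum : ∑ i, (s i : ℤ) * α (κ i) = (2 * n : ℤ) * π := by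
    have : ((∑ i, (s i : ℤ) * α (κ i) : ℝ) : ℂ) = ((2 * n : ℤ) * π : ℝ) := by
      apply mul_right_cancel₀ Complex.I_ne_zero
      rw [hn]
      push_cast
      ring
    exact_mod_cast this
  have h3 := hα.sum_units_eq_three_mul hcard hsum
  have hsodd := odd_sum_units hodd s
  rw [h3] at hsodd
  exact (Int.not_odd_iff_even.2 ⟨3 * n, by ring⟩) hsodd

lemma eventually_exp_sum_ne_one (hα : IsGenericTriple α) : ∀ᶠ ε in 𝓝[>] (0 : ℝ),
    ∀ (s : Fin 3 → ℤˣ) (κ : Fin 3 → Fin 3) (β : Fin 3 → ℝ), dist β (α ∘ κ) < ε →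
      Complex.exp ((∑ i, (s i : ℤ) * β i : ℝ) * Complex.I) ≠ 1 := by
  refine eventually_all.2 fun s => eventually_all.2 fun κ => eventually_forall_dist_lt ?_
  have hcont : Continuous fun β : Fin 3 → ℝ =>
      Complex.exp ((∑ i, (s i : ℤ) * β i : ℝ) * Complex.I) := by fun_prop
  exact hcont.continuousAt.eventually_ne
    (exp_sum_units_mul_ne_one hα (by simp) (by decide) s κ)

lemma eventually_not_isPentagonRatio (hα : IsGenericTriple α) : ∀ᶠ ε in 𝓝[>] (0 : ℝ),
    ∀ (s : Fin 5 → ℤˣ) (σ : Fin 5 → Equiv.Perm (Fin 3)) (β : Fin 5 → Fin 3 → ℝ),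
      dist β (fun i => α ∘ σ i) < ε → ¬ IsPentagonRatio fun i => edgeRatio (s i) (β i) := by
  refine eventually_all.2 fun s => eventually_all.2 fun σ => eventually_forall_dist_lt ?_
  have hcont : ContinuousAt (fun (β : Fin 5 → Fin 3 → ℝ) i => edgeRatio (s i) (β i))
      fun i => α ∘ σ i :=
    continuousAt_pi.2 fun i => ContinuousAt.comp (g := edgeRatio (s i))
      (continuousAt_edgeRatio _ (hα.sin_pos _).ne') (continuous_apply i).continuousAt
  exact hcont.eventually (isClosed_setOf_isPentagonRatio.isOpen_compl.mem_nhds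
    (not_isPentagonRatio hα s σ))

end Perturbation

section Similarity

variable {T : Fin 3 → Plane}

lemma isGenericTriple_triAngle (hT : IsTriangle T)
    (hno : ¬ SatisfiesNontrivLinear (triAngle T 0) (triAngle T 1) (triAngle T 2)) :
    IsGenericTriple (triAngle T) where
  toIsAngleTriple := hT.isAngleTriple
  coeff_eq N n hN hn hsum := by
    by_contra hne
    refine hno ⟨N 0, N 1, N 2, -n, hN 0, hN 1, hN 2, by rwa [abs_neg], ?_, fun h => hne ?_⟩
    · rw [Fin.sum_univ_three] at hsum
      push_cast
      linarith
    · rw [Fin.forall_fin_succ, Fin.forall_fin_two]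
      exact ⟨by omega, by simp; omega⟩

lemma eventually_not_tripleEpsSimilar_common_vertex (hα : IsGenericTriple (triAngle T)) :
    ∀ᶠ ε in 𝓝[>] (0 : ℝ), ∀ x₁ x₂ x₃ x₄ : Plane, TripleEpsSimilar ε T x₁ x₂ x₄ →
      TripleEpsSimilar ε T x₁ x₃ x₄ → ¬ TripleEpsSimilar ε T x₂ x₃ x₄ := by
  filter_upwards [eventually_exp_sum_ne_one hα, self_mem_nhdsWithin] with ε hne hε
  rintro x₁ x₂ x₃ x₄ ⟨h₁₂, σ₁₂, hσ₁₂⟩ ⟨-, σ₁₃, hσ₁₃⟩ ⟨h₂₃, σ₂₃, hσ₂₃⟩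
  have hx₁ : x₁ ≠ x₄ := h₁₂.injective.ne (a₁ := 0) (a₂ := 2) (by decide)
  have hx₂ : x₂ ≠ x₄ := h₂₃.injective.ne (a₁ := 0) (a₂ := 2) (by decide)
  have hx₃ : x₃ ≠ x₄ := h₂₃.injective.ne (a₁ := 1) (a₂ := 2) (by decide)
  obtain ⟨s, hs⟩ := exists_units_exp_sum_angle_eq_one (x := ![x₁, x₂, x₃]) (p := x₄)
    (by simp [Fin.forall_fin_succ, hx₁, hx₂, hx₃])
  refine hne s ![σ₁₂ 2, σ₂₃ 2, σ₁₃ 2] _ ((dist_pi_lt_iff hε).2 fun i => ?_) hs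
  rw [Real.dist_eq]
  fin_cases i
  · exact hσ₁₂ 2
  · exact hσ₂₃ 2
  · exact angle_comm x₁ x₄ x₃ ▸ hσ₁₃ 2

lemma eventually_not_forall_tripleEpsSimilar_pentagon (hα : IsGenericTriple (triAngle T)) :
    ∀ᶠ ε in 𝓝[>] (0 : ℝ), ∀ x : Fin 5 → Plane,
      ¬ ∀ i, TripleEpsSimilar ε T (x i) (x (i + 1)) (x (i + 2)) := by
  filter_upwards [eventually_not_isPentagonRatio hα, self_mem_nhdsWithin] with ε hnot hε x hx
  choose htri σ hσ using hx
  obtain ⟨s, hs⟩ := exists_isPentagonRatio_of_isTriangle htri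
  refine hnot s σ _ ((dist_pi_lt_iff hε).2 fun i => (dist_pi_lt_iff hε).2 fun k => ?_) hs
  exact hσ i k

end Similarity

/-- If the angles of a non-degenerate triangle `T` satisfy no non-trivial linear
equation, then for some `ε > 0` no finite planar set contains (a) four distinct
points realizing `K₄⁻`, or (b) five distinct points realizing the 5-cycle `C₅`,
by triangles ε-similar to `T`. -/
theorem stmt_11 (T : Fin 3 → Plane) (hT : IsTriangle T)
    (hno : ¬ SatisfiesNontrivLinear (triAngle T 0) (triAngle T 1) (triAngle T 2)) :
    ∃ ε : ℝ, 0 < ε ∧ ∀ P : Finset Plane,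
      (¬ ∃ x₁ x₂ x₃ x₄ : Plane, x₁ ∈ P ∧ x₂ ∈ P ∧ x₃ ∈ P ∧ x₄ ∈ P ∧
        x₁ ≠ x₂ ∧ x₁ ≠ x₃ ∧ x₁ ≠ x₄ ∧ x₂ ≠ x₃ ∧ x₂ ≠ x₄ ∧ x₃ ≠ x₄ ∧
        TripleEpsSimilar ε T x₁ x₂ x₄ ∧ TripleEpsSimilar ε T x₁ x₃ x₄ ∧
        TripleEpsSimilar ε T x₂ x₃ x₄) ∧
      (¬ ∃ x : Fin 5 → Plane, Function.Injective x ∧ (∀ i, x i ∈ P) ∧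
        ∀ i : Fin 5, TripleEpsSimilar ε T (x i) (x (i + 1)) (x (i + 2))) := by
  have hα := isGenericTriple_triAngle hT hno
  obtain ⟨ε, hε, hfour, hfive⟩ := (eventually_mem_nhdsWithin.and
    ((eventually_not_tripleEpsSimilar_common_vertex hα).and
      (eventually_not_forall_tripleEpsSimilar_pentagon hα))).exists
  refine ⟨ε, hε, fun P => ⟨?_, ?_⟩⟩
  · rintro ⟨x₁, x₂, x₃, x₄, -, -, -, -, -, -, -, -, -, -, h₁₂, h₁₃, h₂₃⟩
    exact hfour x₁ x₂ x₃ x₄ h₁₂ h₁₃ h₂₃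
  · rintro ⟨x, -, -, hx⟩
    exact hfive x hx

end
end

section
/- Let T be a non-degenerate triangle with angles α, β, γ, and let q₁, q₂, q₃, q₄ be four distinct points in ℝ² such that each of the three triangles q₁q₂q₄, q₁q₃q₄, q₂q₃q₄ is similar to T. Then the angles of T satisfy a non-trivial linear equation, i.e., there exist integers n₁, n₂, n₃, n₄ with |nᵢ| ≤ 5 such that n₁α + n₂β + n₃γ + n₄π = 0 and (n₁, n₂, n₃, n₄) is not a scalar multiple of (1, 1, 1, −1). -/
open EuclideanGeometry

noncomputable section

/-!
Only the angles at `q₄` matter. The oriented angles between the rays from `q₄` to `q₁`, `q₂`, `q₃`,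
taken cyclically, sum to `0` modulo `2π`, and each is `±` the unoriented angle, which is an angle
of `T`. Hence `±a ± b ± c = 2kπ` for some angles `a`, `b`, `c` of `T`, possibly repeated, and
`|2kπ| ≤ 3π` forces `|k| ≤ 1`. Collecting terms gives a linear equation with small coefficients.
It is non-trivial by parity: the coefficients of the three angles have odd sum `±1 ± 1 ± 1`, but
a multiple `(m, m, m, -m)` of the trivial equation would have `m = 2k`, hence even sum `3m`.
-/

theorem odd_coe_units_int (ε : ℤˣ) : Odd (ε : ℤ) := by
  decide +revert

section AnglesAtPoint

variable {V P : Type*} [NormedAddCommGroup V] [InnerProductSpace ℝ V]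
  [Fact (Module.finrank ℝ V = 2)] [MetricSpace P] [NormedAddTorsor V P] {p p₁ p₂ p₃ : P}

theorem exists_units_zsmul_angle_eq_oangle [Module.Oriented ℝ V (Fin 2)]
    (hp₁ : p₁ ≠ p) (hp₂ : p₂ ≠ p) :
    ∃ ε : ℤˣ, (ε : ℤ) • (∠ p₁ p p₂ : Real.Angle) = ∡ p₁ p p₂ := by
  rcases oangle_eq_angle_or_eq_neg_angle hp₁ hp₂ with h | h
  · exact ⟨1, by simp [h]⟩
  · exact ⟨-1, by simp [h]⟩

theorem exists_units_coe_signed_sum_angle_eq_zero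
    (hp₁ : p₁ ≠ p) (hp₂ : p₂ ≠ p) (hp₃ : p₃ ≠ p) :
    ∃ ε₁ ε₂ ε₃ : ℤˣ,
      (((ε₁ : ℤ) * ∠ p₁ p p₂ + (ε₂ : ℤ) * ∠ p₂ p p₃ + (ε₃ : ℤ) * ∠ p₃ p p₁ : ℝ) :
        Real.Angle) = 0 := by
  have : FiniteDimensional ℝ V := .of_fact_finrank_eq_two
  let _ : Module.Oriented ℝ V (Fin 2) :=
    ⟨(Module.finBasisOfFinrankEq ℝ V (Fact.out : Module.finrank ℝ V = 2)).orientation⟩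
  obtain ⟨ε₁, h₁₂⟩ := exists_units_zsmul_angle_eq_oangle hp₁ hp₂
  obtain ⟨ε₂, h₂₃⟩ := exists_units_zsmul_angle_eq_oangle hp₂ hp₃
  obtain ⟨ε₃, h₃₁⟩ := exists_units_zsmul_angle_eq_oangle hp₃ hp₁
  refine ⟨ε₁, ε₂, ε₃, ?_⟩
  simp only [Real.Angle.coe_add, Real.Angle.intCast_mul_eq_zsmul, h₁₂, h₂₃, h₃₁]
  exact oangle_add_cyc3 hp₁ hp₂ hp₃

theorem exists_units_signed_sum_angle_eq_mul_two_pi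
    (hp₁ : p₁ ≠ p) (hp₂ : p₂ ≠ p) (hp₃ : p₃ ≠ p) :
    ∃ (ε₁ ε₂ ε₃ : ℤˣ) (k : ℤ), |k| ≤ 1 ∧
      (ε₁ : ℤ) * ∠ p₁ p p₂ + (ε₂ : ℤ) * ∠ p₂ p p₃ + (ε₃ : ℤ) * ∠ p₃ p p₁ =
        k * (2 * Real.pi) := by
  obtain ⟨ε₁, ε₂, ε₃, hsum⟩ := exists_units_coe_signed_sum_angle_eq_zero hp₁ hp₂ hp₃
  obtain ⟨k, hk⟩ := Real.Angle.coe_eq_zero_iff.mp hsum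
  rw [zsmul_eq_mul] at hk
  refine ⟨ε₁, ε₂, ε₃, k, ?_, hk.symm⟩
  have hterm (ε : ℤˣ) (a b : P) : |((ε : ℤ) : ℝ) * ∠ a p b| ≤ Real.pi := by
    rw [abs_mul, abs_unit_intCast, one_mul, abs_of_nonneg (angle_nonneg a p b)]
    exact angle_le_pi a p b
  have hle : |(k : ℝ)| * (2 * Real.pi) ≤ 3 * Real.pi :=
    calc |(k : ℝ)| * (2 * Real.pi) = |k * (2 * Real.pi)| := by
          rw [abs_mul, abs_of_pos Real.two_pi_pos]
      _ ≤ |(ε₁ : ℤ) * ∠ p₁ p p₂| + |(ε₂ : ℤ) * ∠ p₂ p p₃| + |(ε₃ : ℤ) * ∠ p₃ p p₁| := by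
          rw [hk]
          exact abs_add_three _ _ _
      _ ≤ 3 * Real.pi := by linarith [hterm ε₁ p₁ p₂, hterm ε₂ p₂ p₃, hterm ε₃ p₃ p₁]
  have hlt : |(k : ℝ)| < 2 := by nlinarith [Real.pi_pos]
  exact Int.lt_add_one_iff.mp (mod_cast hlt)

end AnglesAtPoint

theorem satisfiesNontrivLinear_of_odd_sum {f : Fin 3 → ℝ} {n : Fin 3 → ℤ} {k : ℤ}
    (hn : ∀ m, |n m| ≤ 5) (hodd : Odd (∑ m, n m)) (hk : |k| ≤ 2)
    (hsum : ∑ m, n m * f m = k * (2 * Real.pi)) :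
    SatisfiesNontrivLinear (f 0) (f 1) (f 2) := by
  rw [Fin.sum_univ_three] at hodd hsum
  refine ⟨n 0, n 1, n 2, -(2 * k), hn 0, hn 1, hn 2, by grind, ?_, ?_⟩
  · push_cast
    linear_combination hsum
  · rintro ⟨h₀₁, h₁₂, h₂⟩
    have heven : n 0 + n 1 + n 2 = 2 * (3 * k) := by linarith
    exact Int.not_odd_iff_even.mpr (heven ▸ even_two_mul _) hodd

theorem satisfiesNontrivLinear_of_signed_sum {f : Fin 3 → ℝ} {ε₁ ε₂ ε₃ : ℤˣ} {i j l : Fin 3}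
    {k : ℤ} (hk : |k| ≤ 2)
    (hsum : (ε₁ : ℤ) * f i + (ε₂ : ℤ) * f j + (ε₃ : ℤ) * f l = k * (2 * Real.pi)) :
    SatisfiesNontrivLinear (f 0) (f 1) (f 2) := by
  let n : Fin 3 → ℤ := Pi.single i (ε₁ : ℤ) + Pi.single j (ε₂ : ℤ) + Pi.single l (ε₃ : ℤ)
  have hbound : ∀ m, |n m| ≤ 5 := by
    clear hsum
    decide +revert
  have hodd : Odd (∑ m, n m) := by
    have hn : ∑ m, n m = ε₁ + ε₂ + ε₃ := by simp [n, Finset.sum_add_distrib]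
    rw [hn]
    exact ((odd_coe_units_int ε₁).add_odd (odd_coe_units_int ε₂)).add_odd (odd_coe_units_int ε₃)
  refine satisfiesNontrivLinear_of_odd_sum hbound hodd hk ?_
  rw [← hsum]
  simp [n, add_mul, Finset.sum_add_distrib, Pi.single_apply]

theorem TripleSimilar.exists_angle_eq {T : Fin 3 → Plane} {a b c : Plane}
    (h : TripleSimilar T a b c) : ∃ i, ∠ a c b = triAngle T i := by
  obtain ⟨-, σ, hσ⟩ := h
  exact ⟨σ 2, hσ 2⟩

theorem stmt_12_general {V P : Type*} [NormedAddCommGroup V] [InnerProductSpace ℝ V]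
    [Fact (Module.finrank ℝ V = 2)] [MetricSpace P] [NormedAddTorsor V P]
    {f : Fin 3 → ℝ} {q₁ q₂ q₃ q₄ : P} (hd14 : q₁ ≠ q₄) (hd24 : q₂ ≠ q₄) (hd34 : q₃ ≠ q₄)
    (h12 : ∃ i, ∠ q₁ q₄ q₂ = f i) (h13 : ∃ i, ∠ q₁ q₄ q₃ = f i) (h23 : ∃ i, ∠ q₂ q₄ q₃ = f i) :
    SatisfiesNontrivLinear (f 0) (f 1) (f 2) := by
  obtain ⟨ε₁, ε₂, ε₃, k, hk, hsum⟩ := exists_units_signed_sum_angle_eq_mul_two_pi hd14 hd24 hd34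
  obtain ⟨i, hi⟩ := h12
  obtain ⟨j, hj⟩ := h23
  obtain ⟨l, hl⟩ := h13
  rw [angle_comm q₃, hi, hj, hl] at hsum
  exact satisfiesNontrivLinear_of_signed_sum (hk.trans one_le_two) hsum

/-- If `q₁, q₂, q₃, q₄` are four distinct points such that the triangles
`q₁q₂q₄`, `q₁q₃q₄`, `q₂q₃q₄` are all similar to the non-degenerate triangle `T`,
then the angles of `T` satisfy a non-trivial linear equation. -/
theorem stmt_12 (T : Fin 3 → Plane) (hT : IsTriangle T)
    (q₁ q₂ q₃ q₄ : Plane)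
    (hd12 : q₁ ≠ q₂) (hd13 : q₁ ≠ q₃) (hd14 : q₁ ≠ q₄)
    (hd23 : q₂ ≠ q₃) (hd24 : q₂ ≠ q₄) (hd34 : q₃ ≠ q₄)
    (h1 : TripleSimilar T q₁ q₂ q₄) (h2 : TripleSimilar T q₁ q₃ q₄)
    (h3 : TripleSimilar T q₂ q₃ q₄) :
    SatisfiesNontrivLinear (triAngle T 0) (triAngle T 1) (triAngle T 2) := by
  have : Fact (Module.finrank ℝ Plane = 2) := ⟨finrank_euclideanSpace_fin⟩
  exact stmt_12_general hd14 hd24 hd34 h1.exists_angle_eq h2.exists_angle_eq h3.exists_angle_eq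

end
end

section
/- Let T be a non-degenerate triangle with angles α, β, γ, and let q₁, …, q₅ be five distinct points in ℝ² such that for every i (indices modulo 5) the triangle q_i q_{i+1} q_{i+2} is similar to T. Then the angles of T satisfy a non-trivial linear equation, i.e., there exist integers n₁, n₂, n₃, n₄ with |nᵢ| ≤ 5 such that n₁α + n₂β + n₃γ + n₄π = 0 and (n₁, n₂, n₃, n₄) is not a scalar multiple of (1, 1, 1, −1). -/
open EuclideanGeometry

noncomputable section

/-!
Identify the plane with `ℂ`. The quotient of two consecutive edges of the pentagon `q` is, by the
law of sines, a ratio of sines of angles of `T` times `-exp (∓ i φ)`, where `φ` is an angle of `T`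
and the sign is the orientation of the corner. The five quotients multiply to `1`, so the signed sum
of the five corner angles is a multiple of `π`. This is the desired relation unless the three angles
of `T` all occur with the same coefficient in it. In that case the sum of the five signs is
divisible by `3`, so exactly one corner is oriented differently from the others, and up to symmetry
it carries the angle `α` while the other corners carry `α, α, β, γ` in some order.

Let `x` be the apex of a triangle similar to `T` on the base `0, 1`, and `y` its conjugate. The edge
quotients are rational functions of `x` and `y`, and that the pentagon closes up is a polynomial
equation in `x` and `y`. Together with its conjugate and `x ≠ y` it leaves only six curves, each of
which is a linear relation between the angles.
-/

section Arrangements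

variable {α : Type*} {a b c d r₁ r₂ r₃ r₄ : α}

lemma triple_cases_of_perm {P : α → α → α → Prop} (h : [r₁, r₂, r₃, r₄].Perm [a, b, c, d])
    (habc : P a b c) (habd : P a b d) (hacb : P a c b) (hacd : P a c d) (hadb : P a d b)
    (hadc : P a d c) (hbac : P b a c) (hbad : P b a d) (hbca : P b c a) (hbcd : P b c d)
    (hbda : P b d a) (hbdc : P b d c) (hcab : P c a b) (hcad : P c a d) (hcba : P c b a)
    (hcbd : P c b d) (hcda : P c d a) (hcdb : P c d b) (hdab : P d a b) (hdac : P d a c)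
    (hdba : P d b a) (hdbc : P d b c) (hdca : P d c a) (hdcb : P d c b) : P r₁ r₂ r₃ := by
  have hmem := List.mem_permutations.2 h
  simp only [List.permutations, List.permutationsAux, List.permutationsAux.rec,
    List.permutationsAux2, List.foldr_cons, List.foldr_nil, id_eq, List.mem_cons,
    List.cons.injEq, and_true, List.not_mem_nil, or_false] at hmem
  grind (splits := 24)

lemma triple_cases_of_perm_repeated {P : α → α → α → Prop}
    (h : [r₁, r₂, r₃, r₄].Perm [a, a, c, d])
    (haac : P a a c) (haad : P a a d) (haca : P a c a) (hacd : P a c d) (hada : P a d a)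
    (hadc : P a d c) (hcaa : P c a a) (hcad : P c a d) (hcda : P c d a) (hdaa : P d a a)
    (hdac : P d a c) (hdca : P d c a) : P r₁ r₂ r₃ := by
  apply triple_cases_of_perm h <;> assumption

end Arrangements

/-- `x` and `y` are distinct and exchanged by the field endomorphism `σ`. Here `σ` is complex
conjugation, and the pair is an apex of a triangle on the base `0, 1` together with its mirror
image. -/
structure ConjugatePair {K : Type*} [Field K] (σ : K →+* K) (x y : K) : Prop where
  map_left : σ x = y
  map_right : σ y = x
  ne : x ≠ y

/-- The algebraic conditions on the apex `x` of a triangle on the base `0, 1` and its mirror image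
`y` to which the closing equations lead. As `x * y` and `(1 - x) * (1 - y)` are the squared lengths
of the two other sides, the first three say that the triangle is isosceles and the fourth one that
it has a right angle at `0`. -/
def IsExceptional {K : Type*} [Field K] (x y : K) : Prop :=
  x * y = 1 ∨ (1 - x) * (1 - y) = 1 ∨ x * y = (1 - x) * (1 - y) ∨ x + y = 0 ∨
    (x * y - 1) ^ 2 = (1 - x) * (1 - y) ∨ (x * y - 1) ^ 2 = x * y * ((1 - x) * (1 - y))

section ClosingEquations

variable {K : Type*} [Field K] {σ : K →+* K} {x y r₁ r₂ r₃ r₄ : K}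

namespace ConjugatePair

lemma symm (h : ConjugatePair σ x y) : ConjugatePair σ y x :=
  ⟨h.map_right, h.map_left, h.ne.symm⟩

lemma ne_zero (h : ConjugatePair σ x y) : x ≠ 0 := by
  rintro rfl
  exact h.ne (by rw [← h.map_left, map_zero])

lemma one_sub_ne_zero (h : ConjugatePair σ x y) : 1 - x ≠ 0 := by
  refine sub_ne_zero.2 ?_
  rintro rfl
  exact h.ne (by rw [← h.map_left, map_one])

lemma denominators_ne_zero (h : ConjugatePair σ x y) :
    x ≠ 0 ∧ y ≠ 0 ∧ 1 - x ≠ 0 ∧ 1 - y ≠ 0 :=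
  ⟨h.ne_zero, h.symm.ne_zero, h.one_sub_ne_zero, h.symm.one_sub_ne_zero⟩

end ConjugatePair

lemma isosceles_or_perm_of_prod_eq (hxy : ConjugatePair σ x y) (hN : x * y ≠ -1) {a b c d : K}
    (ha : a = -1 / x ∨ a = -y) (hb : b = -1 / x ∨ b = -y)
    (hc : c = x - 1 ∨ c = -1 / (1 - y)) (hd : d = x / (1 - x) ∨ d = (1 - y) / y)
    (hprod : a * b * c * d = -1 / x) :
    (x * y = 1 ∨ (1 - x) * (1 - y) = 1 ∨ x * y = (1 - x) * (1 - y)) ∨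
    [a, b, c, d].Perm [-1 / x, -1 / x, x - 1, x / (1 - x)] ∨
    [a, b, c, d].Perm [-1 / x, -y, -1 / (1 - y), (1 - y) / y] ∨
    ((x * y) ^ 2 = (1 - x) * (1 - y) ∧
      [a, b, c, d].Perm [-y, -y, -1 / (1 - y), x / (1 - x)]) ∨
    (x * y * ((1 - x) * (1 - y)) = 1 ∧ [a, b, c, d].Perm [-y, -y, x - 1, (1 - y) / y]) := by
  have ⟨hx₀, hy₀, hx₁, hy₁⟩ := hxy.denominators_ne_zero
  rcases ha with rfl | rfl <;> rcases hb with rfl | rfl <;> rcases hc with rfl | rfl <;>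
    rcases hd with rfl | rfl <;> field_simp at hprod
  case inl.inl.inl.inl => exact .inr (.inl (.refl _))
  case inl.inr.inr.inr => exact .inr (.inr (.inl (.refl _)))
  case inr.inl.inr.inr => exact .inr (.inr (.inl (.swap ..)))
  case inr.inr.inr.inl => exact .inr (.inr (.inr (.inl ⟨by grind, .refl _⟩)))
  case inr.inr.inl.inr => exact .inr (.inr (.inr (.inr ⟨by grind, .refl _⟩)))
  all_goals
    left
    grind

lemma ConjugatePair.cubic_quotient_eq_zero (hxy : ConjugatePair σ x y) {a b c : ℤ}
    (h : x ^ 3 + a * x ^ 2 + b * x + c = 0) :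
    x ^ 2 + x * y + y ^ 2 + a * (x + y) + b = 0 := by
  have hσ := congrArg σ h
  simp only [map_add, map_mul, map_pow, map_intCast, map_zero, hxy.map_left] at hσ
  refine (mul_eq_zero.1 ?_).resolve_left (sub_ne_zero.2 hxy.ne)
  linear_combination h - hσ

lemma mul_eq_one_or_add_eq_zero_of_closing (hxy : ConjugatePair σ x y)
    (hr : [r₁, r₂, r₃, r₄].Perm [-1 / x, -y, -1 / (1 - y), (1 - y) / y])
    (h : 1 + r₁ + r₁ * r₂ + r₁ * r₂ * r₃ = 1 / x) : x * y = 1 ∨ x + y = 0 := by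
  have ⟨hx, hy, hne⟩ := hxy
  have ⟨hx₀, hy₀, hx₁, hy₁⟩ := hxy.denominators_ne_zero
  revert h
  -- The closing equation and its conjugate are two polynomial equations in `x ≠ y`; for every order
  -- of the quotients, eliminating one variable leaves the asserted factors.
  apply triple_cases_of_perm hr
  all_goals
    intro h
    have hσ := congrArg σ h
    simp only [map_add, map_sub, map_mul, map_div₀, map_neg, map_one, hx, hy] at hσ
    field_simp at h hσ
    grind

variable [CharZero K]

lemma mul_eq_one_or_cubic_of_closing (hxy : ConjugatePair σ x y)
    (hr : [r₁, r₂, r₃, r₄].Perm [-1 / x, -1 / x, x - 1, x / (1 - x)])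
    (h : 1 + r₁ + r₁ * r₂ + r₁ * r₂ * r₃ = 1 / x) :
    x * y = 1 ∨ x ^ 3 - 3 * x ^ 2 + 2 * x - 1 = 0 ∨ x ^ 3 - 2 * x ^ 2 + 3 * x - 1 = 0 := by
  have ⟨hx, _, hne⟩ := hxy
  have ⟨hx₀, hy₀, hx₁, hy₁⟩ := hxy.denominators_ne_zero
  revert h
  apply triple_cases_of_perm_repeated hr
  all_goals
    intro h
    have hσ := congrArg σ h
    simp only [map_add, map_sub, map_mul, map_div₀, map_neg, map_one, hx] at hσ
    field_simp at h hσ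
    grind

lemma not_closing_of_sq_eq (hxy : ConjugatePair σ x y) (hN : (x * y) ^ 2 = (1 - x) * (1 - y))
    (hr : [r₁, r₂, r₃, r₄].Perm [-y, -y, -1 / (1 - y), x / (1 - x)]) :
    1 + r₁ + r₁ * r₂ + r₁ * r₂ * r₃ ≠ 1 / x := by
  have ⟨hx, hy, hne⟩ := hxy
  have ⟨hx₀, hy₀, hx₁, hy₁⟩ := hxy.denominators_ne_zero
  apply triple_cases_of_perm_repeated hr
  all_goals
    intro h
    have hσ := congrArg σ h
    simp only [map_add, map_sub, map_mul, map_div₀, map_neg, map_one, hx, hy] at hσ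
    field_simp at h hσ
    grind

lemma not_closing_of_mul_eq_one (hxy : ConjugatePair σ x y)
    (hN : x * y * ((1 - x) * (1 - y)) = 1)
    (hr : [r₁, r₂, r₃, r₄].Perm [-y, -y, x - 1, (1 - y) / y]) :
    1 + r₁ + r₁ * r₂ + r₁ * r₂ * r₃ ≠ 1 / x := by
  have ⟨hx, hy, hne⟩ := hxy
  have ⟨hx₀, hy₀, hx₁, hy₁⟩ := hxy.denominators_ne_zero
  apply triple_cases_of_perm_repeated hr
  all_goals
    intro h
    have hσ := congrArg σ h
    simp only [map_add, map_sub, map_mul, map_div₀, map_neg, map_one, hx, hy] at hσ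
    field_simp at h hσ
    grind

lemma isExceptional_of_closing_cyclic (hxy : ConjugatePair σ x y)
    (hr : [r₁, r₂, r₃, r₄].Perm [-1 / x, -1 / x, x - 1, x / (1 - x)])
    (h : 1 + r₁ + r₁ * r₂ + r₁ * r₂ * r₃ = 1 / x) : IsExceptional x y := by
  rcases mul_eq_one_or_cubic_of_closing hxy hr h with hone | hcubic | hcubic
  · exact .inl hone
  · have hquot := hxy.cubic_quotient_eq_zero (a := -3) (b := 2) (c := -1)
      (by push_cast; linear_combination hcubic)
    push_cast at hquot
    right; right; right; right; right
    grind
  · have hquot := hxy.cubic_quotient_eq_zero (a := -2) (b := 3) (c := -1)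
      (by push_cast; linear_combination hcubic)
    push_cast at hquot
    right; right; right; right; left
    grind

lemma isExceptional_of_closing (hxy : ConjugatePair σ x y) (hN : x * y ≠ -1) {a b c d : K}
    (ha : a = -1 / x ∨ a = -y) (hb : b = -1 / x ∨ b = -y)
    (hc : c = x - 1 ∨ c = -1 / (1 - y)) (hd : d = x / (1 - x) ∨ d = (1 - y) / y)
    (hr : [r₁, r₂, r₃, r₄].Perm [a, b, c, d]) (hprod : a * b * c * d = -1 / x)
    (hclose : 1 + r₁ + r₁ * r₂ + r₁ * r₂ * r₃ = 1 / x) : IsExceptional x y := by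
  rcases isosceles_or_perm_of_prod_eq hxy hN ha hb hc hd hprod with
    (h | h | h) | hperm | hperm | ⟨hNM, hperm⟩ | ⟨hNM, hperm⟩
  · exact .inl h
  · exact .inr (.inl h)
  · exact .inr (.inr (.inl h))
  · exact isExceptional_of_closing_cyclic hxy (hr.trans hperm) hclose
  · rcases mul_eq_one_or_add_eq_zero_of_closing hxy (hr.trans hperm) hclose with h | h
    · exact .inl h
    · exact .inr (.inr (.inr (.inl h)))
  · exact absurd hclose (not_closing_of_sq_eq hxy hNM (hr.trans hperm))
  · exact absurd hclose (not_closing_of_mul_eq_one hxy hNM (hr.trans hperm))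

end ClosingEquations

section AngleRelations

/-- `θ` lists the angles of a non-degenerate triangle. -/
structure IsTriangleAngles (θ : Fin 3 → ℝ) : Prop where
  pos : ∀ j, 0 < θ j
  sum_eq_pi : θ 0 + θ 1 + θ 2 = Real.pi

/-- Some integer combination of the angles `θ` with coefficients of absolute value at most `5`, not
all equal, is a multiple of `π`. For the angles of a triangle the multiple is then at most `5` in
absolute value, and the relation is not a multiple of `θ 0 + θ 1 + θ 2 = π`. -/
def HasAngleRelation (θ : Fin 3 → ℝ) : Prop :=
  ∃ n : Fin 3 → ℤ, (∀ j, |n j| ≤ 5) ∧ (∃ j k, n j ≠ n k) ∧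
    ∃ m : ℤ, ∑ j, n j * θ j = m * Real.pi

variable {θ : Fin 3 → ℝ}

lemma HasAngleRelation.of_comp_perm (p : Equiv.Perm (Fin 3)) (h : HasAngleRelation (θ ∘ p)) :
    HasAngleRelation θ := by
  obtain ⟨n, hn, ⟨j, k, hjk⟩, m, hm⟩ := h
  refine ⟨n ∘ p.symm, fun j => hn _, ⟨p j, p k, by simpa using hjk⟩, m, ?_⟩
  rw [← hm, ← Equiv.sum_comp p]
  simp

namespace IsTriangleAngles

lemma comp_perm (h : IsTriangleAngles θ) (p : Equiv.Perm (Fin 3)) : IsTriangleAngles (θ ∘ p) where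
  pos j := h.pos (p j)
  sum_eq_pi := by
    have := Equiv.sum_comp p θ
    simp only [Fin.sum_univ_three] at this
    simpa [this] using h.sum_eq_pi

lemma lt_pi (h : IsTriangleAngles θ) (j : Fin 3) : θ j < Real.pi := by
  have := h.pos 0
  have := h.pos 1
  have := h.pos 2
  have := h.sum_eq_pi
  fin_cases j <;> simp only [Fin.mk_one, Fin.zero_eta, Fin.reduceFinMk] <;> linarith

lemma sin_pos (h : IsTriangleAngles θ) (j : Fin 3) : 0 < Real.sin (θ j) :=
  Real.sin_pos_of_pos_of_lt_pi (h.pos j) (h.lt_pi j)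

lemma abs_le_of_sum_eq (h : IsTriangleAngles θ) {n : Fin 3 → ℤ} {m : ℤ} {b : ℤ}
    (hn : ∀ j, |n j| ≤ b) (hm : ∑ j, n j * θ j = m * Real.pi) : |m| ≤ b := by
  have hbound : |m * Real.pi| ≤ b * Real.pi := by
    calc |m * Real.pi| = |∑ j, n j * θ j| := by rw [hm]
      _ ≤ ∑ j, |n j * θ j| := Finset.abs_sum_le_sum_abs _ _
      _ ≤ ∑ j, b * θ j := Finset.sum_le_sum fun j _ => by
        rw [abs_mul, abs_of_pos (h.pos j)]
        exact mul_le_mul_of_nonneg_right (mod_cast hn j) (h.pos j).le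
      _ = b * Real.pi := by rw [← Finset.mul_sum, Fin.sum_univ_three, h.sum_eq_pi]
  rw [abs_mul, abs_of_pos Real.pi_pos] at hbound
  exact_mod_cast le_of_mul_le_mul_right hbound Real.pi_pos

lemma satisfiesNontrivLinear (h : IsTriangleAngles θ) (hrel : HasAngleRelation θ) :
    SatisfiesNontrivLinear (θ 0) (θ 1) (θ 2) := by
  obtain ⟨n, hn, ⟨j, k, hjk⟩, m, hm⟩ := hrel
  refine ⟨n 0, n 1, n 2, -m, hn 0, hn 1, hn 2, ?_, ?_, ?_⟩
  · rw [abs_neg]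
    exact h.abs_le_of_sum_eq hn hm
  · rw [Fin.sum_univ_three] at hm
    push_cast
    linear_combination hm
  · rintro ⟨h01, h12, -⟩
    refine hjk ?_
    fin_cases j <;> fin_cases k <;> simp [h01, h12]

end IsTriangleAngles

lemma exists_eq_int_mul_pi_of_sin_sq_eq {a b : ℝ} (h : Real.sin a ^ 2 = Real.sin b ^ 2) :
    ∃ k : ℤ, a - b = k * Real.pi ∨ a + b = k * Real.pi := by
  have hcos : Real.cos (2 * b) = Real.cos (2 * a) := by
    rw [Real.cos_two_mul', Real.cos_two_mul', Real.cos_sq', Real.cos_sq', h]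
  obtain ⟨k, hk⟩ := Real.cos_eq_cos_iff.1 hcos
  exact ⟨k, hk.imp (fun hk => by linarith) (fun hk => by linarith)⟩

lemma hasAngleRelation_of_sin_sq_eq {j k : Fin 3} (hjk : j ≠ k)
    (h : Real.sin (θ j) ^ 2 = Real.sin (θ k) ^ 2) : HasAngleRelation θ := by
  obtain ⟨l, hlj, hlk⟩ := (by decide : ∀ j k : Fin 3, ∃ l, l ≠ j ∧ l ≠ k) j k
  have relation_of_coeff (e : ℤ) (he : |e| ≤ 5) (m : ℤ) (hm : θ j + e * θ k = m * Real.pi) :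
      HasAngleRelation θ := by
    refine ⟨fun i => if i = j then 1 else if i = k then e else 0, fun i => ?_,
      ⟨j, l, by simp [hlj, hlk]⟩, m, ?_⟩
    · dsimp only
      split_ifs <;> simp [he]
    · simp [← hm, ite_mul, Finset.sum_ite, Finset.filter_eq', Finset.filter_ne', hjk.symm]
  obtain ⟨m, hm | hm⟩ := exists_eq_int_mul_pi_of_sin_sq_eq h
  · exact relation_of_coeff (-1) (by norm_num) m (by push_cast; linarith)
  · exact relation_of_coeff 1 (by norm_num) m (by push_cast; linarith)

lemma hasAngleRelation_of_cos_eq_zero (h : Real.cos (θ 0) = 0) : HasAngleRelation θ := by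
  obtain ⟨k, hk⟩ := Real.cos_eq_zero_iff.1 h
  refine ⟨![2, 0, 0], by decide, ⟨0, 1, by decide⟩, 2 * k + 1, ?_⟩
  simp only [Fin.sum_univ_three, Matrix.cons_val, hk]
  push_cast
  ring

lemma hasAngleRelation_of_sin_sub_sq_eq_right
    (h : Real.sin (θ 1 - θ 2) ^ 2 = Real.sin (θ 2) ^ 2) : HasAngleRelation θ := by
  obtain ⟨m, hm | hm⟩ := exists_eq_int_mul_pi_of_sin_sq_eq h
  · exact ⟨![0, 1, -2], by decide, ⟨0, 1, by decide⟩, m, by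
      simp only [Fin.sum_univ_three, Matrix.cons_val]; push_cast; linarith⟩
  · exact ⟨![0, 1, 0], by decide, ⟨0, 1, by decide⟩, m, by
      simp only [Fin.sum_univ_three, Matrix.cons_val]; push_cast; linarith⟩

lemma hasAngleRelation_of_sin_sub_sq_eq_left
    (h : Real.sin (θ 1 - θ 2) ^ 2 = Real.sin (θ 1) ^ 2) : HasAngleRelation θ := by
  obtain ⟨m, hm | hm⟩ := exists_eq_int_mul_pi_of_sin_sq_eq h
  · exact ⟨![0, 0, -1], by decide, ⟨0, 2, by decide⟩, m, by
      simp only [Fin.sum_univ_three, Matrix.cons_val]; push_cast; linarith⟩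
  · exact ⟨![0, 2, -1], by decide, ⟨0, 1, by decide⟩, m, by
      simp only [Fin.sum_univ_three, Matrix.cons_val]; push_cast; linarith⟩

lemma IsTriangleAngles.sin_sq_sub_sin_sq (h : IsTriangleAngles θ) :
    Real.sin (θ 1) ^ 2 - Real.sin (θ 2) ^ 2 = Real.sin (θ 0) * Real.sin (θ 1 - θ 2) := by
  have h0 : θ 0 = Real.pi - (θ 1 + θ 2) := by linarith [h.sum_eq_pi]
  rw [h0, Real.sin_pi_sub, Real.sin_add, Real.sin_sub]
  linear_combination Real.sin (θ 2) ^ 2 * Real.sin_sq_add_cos_sq (θ 1) -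
    Real.sin (θ 1) ^ 2 * Real.sin_sq_add_cos_sq (θ 2)

end AngleRelations

section Apex

open ComplexConjugate

/-- The vertex carrying the angle `θ 2` of the triangle with the angles `θ 0` at `0` and `θ 1`
at `1`. -/
def apex (θ : Fin 3 → ℝ) : ℂ :=
  (Real.sin (θ 1) / Real.sin (θ 2) : ℝ) * Complex.exp (θ 0 * Complex.I)

variable {θ : Fin 3 → ℝ}

lemma conj_exp_mul_I (t : ℝ) :
    conj (Complex.exp (t * Complex.I)) = (Complex.exp (t * Complex.I))⁻¹ := by
  rw [← Complex.exp_conj, ← Complex.exp_neg]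
  simp

lemma conj_apex (θ : Fin 3 → ℝ) : conj (apex θ) =
    (Real.sin (θ 1) / Real.sin (θ 2) : ℝ) * (Complex.exp (θ 0 * Complex.I))⁻¹ := by
  rw [apex, map_mul, Complex.conj_ofReal, conj_exp_mul_I]

lemma apex_mul_conj (θ : Fin 3 → ℝ) :
    apex θ * conj (apex θ) = ((Real.sin (θ 1) / Real.sin (θ 2)) ^ 2 : ℝ) := by
  rw [conj_apex, apex, mul_mul_mul_comm, mul_inv_cancel₀ (Complex.exp_ne_zero _)]
  push_cast
  ring

lemma apex_im (θ : Fin 3 → ℝ) :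
    (apex θ).im = Real.sin (θ 1) / Real.sin (θ 2) * Real.sin (θ 0) := by
  rw [apex, Complex.im_ofReal_mul, Complex.exp_ofReal_mul_I_im]

lemma apex_re (θ : Fin 3 → ℝ) :
    (apex θ).re = Real.sin (θ 1) / Real.sin (θ 2) * Real.cos (θ 0) := by
  rw [apex, Complex.re_ofReal_mul, Complex.exp_ofReal_mul_I_re]

lemma apex_mul_conj_ne_neg_one (θ : Fin 3 → ℝ) : apex θ * conj (apex θ) ≠ -1 := by
  rw [apex_mul_conj]
  intro hneg
  have hneg : (Real.sin (θ 1) / Real.sin (θ 2)) ^ 2 = -1 := mod_cast hneg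
  linarith [sq_nonneg (Real.sin (θ 1) / Real.sin (θ 2))]

namespace IsTriangleAngles

lemma one_sub_apex (h : IsTriangleAngles θ) : 1 - apex θ =
    (Real.sin (θ 0) / Real.sin (θ 2) : ℝ) * (Complex.exp (θ 1 * Complex.I))⁻¹ := by
  have hsin : (Real.sin (θ 2) : ℂ) ≠ 0 := mod_cast (h.sin_pos 2).ne'
  have hadd : (Real.sin (θ 2) : ℂ) =
      Real.sin (θ 0) * Real.cos (θ 1) + Real.cos (θ 0) * Real.sin (θ 1) := by
    have hθ₂ : θ 2 = Real.pi - (θ 0 + θ 1) := by linarith [h.sum_eq_pi]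
    rw [hθ₂, Real.sin_pi_sub, Real.sin_add]
    push_cast
    rfl
  rw [← conj_exp_mul_I, apex, Complex.exp_mul_I, Complex.exp_mul_I, Complex.ofReal_div,
    Complex.ofReal_div, ← Complex.ofReal_cos, ← Complex.ofReal_sin, ← Complex.ofReal_cos,
    ← Complex.ofReal_sin]
  simp only [map_add, map_mul, Complex.conj_ofReal, Complex.conj_I]
  field_simp
  linear_combination hadd

lemma one_sub_conj_apex (h : IsTriangleAngles θ) : 1 - conj (apex θ) =
    (Real.sin (θ 0) / Real.sin (θ 2) : ℝ) * Complex.exp (θ 1 * Complex.I) := by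
  have := congrArg conj h.one_sub_apex
  rwa [map_sub, map_one, map_mul, map_inv₀, Complex.conj_ofReal, conj_exp_mul_I, inv_inv] at this

lemma one_sub_apex_mul_conj (h : IsTriangleAngles θ) :
    (1 - apex θ) * (1 - conj (apex θ)) = ((Real.sin (θ 0) / Real.sin (θ 2)) ^ 2 : ℝ) := by
  rw [h.one_sub_apex, h.one_sub_conj_apex, mul_mul_mul_comm,
    inv_mul_cancel₀ (Complex.exp_ne_zero _)]
  push_cast
  ring

lemma conjugatePair_apex (h : IsTriangleAngles θ) :
    ConjugatePair (starRingEnd ℂ) (apex θ) (conj (apex θ)) where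
  map_left := rfl
  map_right := Complex.conj_conj _
  ne hreal := by
    have him : (apex θ).im = 0 := Complex.conj_eq_iff_im.1 hreal.symm
    have : 0 < (apex θ).im := by
      rw [apex_im]
      exact mul_pos (div_pos (h.sin_pos 1) (h.sin_pos 2)) (h.sin_pos 0)
    exact this.ne' him

lemma hasAngleRelation_of_isExceptional (h : IsTriangleAngles θ)
    (hexc : IsExceptional (apex θ) (conj (apex θ))) : HasAngleRelation θ := by
  have h₀ := (h.sin_pos 0).ne'
  have h₁ := (h.sin_pos 1).ne'
  have h₂ := (h.sin_pos 2).ne'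
  have hdiff := h.sin_sq_sub_sin_sq
  rw [IsExceptional, apex_mul_conj, h.one_sub_apex_mul_conj, Complex.add_conj] at hexc
  norm_cast at hexc
  rcases hexc with hN | hM | hNM | hre | hsq | hsq
  · refine hasAngleRelation_of_sin_sq_eq (j := 1) (k := 2) (by decide) ?_
    field_simp at hN
    exact hN
  · refine hasAngleRelation_of_sin_sq_eq (j := 0) (k := 2) (by decide) ?_
    field_simp at hM
    exact hM
  · refine hasAngleRelation_of_sin_sq_eq (j := 1) (k := 0) (by decide) ?_
    field_simp at hNM
    exact hNM
  · refine hasAngleRelation_of_cos_eq_zero ?_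
    rw [apex_re] at hre
    simpa [h₁, h₂] using hre
  · refine hasAngleRelation_of_sin_sub_sq_eq_right (mul_left_cancel₀ (pow_ne_zero 2 h₀) ?_)
    rw [← mul_pow, ← hdiff]
    field_simp at hsq
    linear_combination hsq
  · refine hasAngleRelation_of_sin_sub_sq_eq_left (mul_left_cancel₀ (pow_ne_zero 2 h₀) ?_)
    rw [← mul_pow, ← hdiff]
    field_simp at hsq
    linear_combination hsq

end IsTriangleAngles

end Apex

section Turns

open ComplexConjugate

/-- The quotient `(c - b) / (b - a)` of consecutive edges of a triangle `a b c` in the complex plane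
with the angles `θ (s 0)`, `θ (s 1)`, `θ (s 2)` at `a`, `b`, `c`. Its modulus is given by the law of
sines; the sign `ε` is `1` if the triangle is positively oriented and `-1` otherwise. -/
def turn (θ : Fin 3 → ℝ) (s : Equiv.Perm (Fin 3)) (ε : ℤˣ) : ℂ :=
  -((Real.sin (θ (s 0)) / Real.sin (θ (s 2)) : ℝ) *
    Complex.exp (θ (s 1) * Complex.I) ^ (-(ε : ℤ)))

variable {θ : Fin 3 → ℝ}

lemma turn_comp_perm (θ : Fin 3 → ℝ) (p s : Equiv.Perm (Fin 3)) (ε : ℤˣ) :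
    turn (θ ∘ p) s ε = turn θ (p * s) ε := rfl

lemma conj_turn (θ : Fin 3 → ℝ) (s : Equiv.Perm (Fin 3)) (ε : ℤˣ) :
    conj (turn θ s ε) = turn θ s (-ε) := by
  rw [turn, turn, map_neg, map_mul, Complex.conj_ofReal, map_zpow₀, conj_exp_mul_I, inv_zpow',
    Units.val_neg]

lemma turn_swap_neg_one (θ : Fin 3 → ℝ) : turn θ (Equiv.swap 0 1) (-1) = -apex θ := by
  have h₂ : Equiv.swap (0 : Fin 3) 1 2 = 2 := by decide
  rw [turn, apex, Equiv.swap_apply_left, Equiv.swap_apply_right, h₂, Units.val_neg, Units.val_one,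
    neg_neg, zpow_one]

namespace IsTriangleAngles

lemma inv_exp_two (h : IsTriangleAngles θ) : (Complex.exp (θ 2 * Complex.I))⁻¹ =
    -(Complex.exp (θ 0 * Complex.I) * Complex.exp (θ 1 * Complex.I)) := by
  have hθ₂ : θ 2 = Real.pi - (θ 0 + θ 1) := by linarith [h.sum_eq_pi]
  have hexp : -(θ 2 * Complex.I) = θ 0 * Complex.I + θ 1 * Complex.I - Real.pi * Complex.I := by
    rw [hθ₂]
    push_cast
    ring
  rw [← Complex.exp_neg, hexp, Complex.exp_sub_pi_mul_I, Complex.exp_add]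

lemma turn_one_of_apply_one_eq_zero (h : IsTriangleAngles θ) {s : Equiv.Perm (Fin 3)}
    (hs : s 1 = 0) : turn θ s 1 = -1 / apex θ ∨ turn θ s 1 = -conj (apex θ) := by
  have h₁ : (Real.sin (θ 1) : ℂ) ≠ 0 := mod_cast (h.sin_pos 1).ne'
  have h₂ : (Real.sin (θ 2) : ℂ) ≠ 0 := mod_cast (h.sin_pos 2).ne'
  have hE := Complex.exp_ne_zero (θ 0 * Complex.I)
  have hcases : s 0 = 2 ∧ s 2 = 1 ∨ s 0 = 1 ∧ s 2 = 2 := by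
    revert s
    decide
  rw [conj_apex, turn, apex, hs, Units.val_one, zpow_neg_one, Complex.ofReal_div,
    Complex.ofReal_div]
  rcases hcases with ⟨hs₀, hs₂⟩ | ⟨hs₀, hs₂⟩ <;> rw [hs₀, hs₂]
  · left
    field_simp
  · right
    rfl

lemma turn_one_of_apply_one_eq_one (h : IsTriangleAngles θ) {s : Equiv.Perm (Fin 3)}
    (hs : s 1 = 1) : turn θ s 1 = apex θ - 1 ∨ turn θ s 1 = -1 / (1 - conj (apex θ)) := by
  have h₀ : (Real.sin (θ 0) : ℂ) ≠ 0 := mod_cast (h.sin_pos 0).ne'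
  have h₂ : (Real.sin (θ 2) : ℂ) ≠ 0 := mod_cast (h.sin_pos 2).ne'
  have hE := Complex.exp_ne_zero (θ 1 * Complex.I)
  have hcases : s 0 = 0 ∧ s 2 = 2 ∨ s 0 = 2 ∧ s 2 = 0 := by
    revert s
    decide
  rw [← neg_sub, h.one_sub_conj_apex, h.one_sub_apex, turn, hs, Units.val_one, zpow_neg_one,
    Complex.ofReal_div, Complex.ofReal_div]
  rcases hcases with ⟨hs₀, hs₂⟩ | ⟨hs₀, hs₂⟩ <;> rw [hs₀, hs₂]
  · left
    rfl
  · right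
    field_simp

lemma turn_one_of_apply_one_eq_two (h : IsTriangleAngles θ) {s : Equiv.Perm (Fin 3)}
    (hs : s 1 = 2) : turn θ s 1 = apex θ / (1 - apex θ) ∨
      turn θ s 1 = (1 - conj (apex θ)) / conj (apex θ) := by
  have h₀ : (Real.sin (θ 0) : ℂ) ≠ 0 := mod_cast (h.sin_pos 0).ne'
  have h₁ : (Real.sin (θ 1) : ℂ) ≠ 0 := mod_cast (h.sin_pos 1).ne'
  have h₂ : (Real.sin (θ 2) : ℂ) ≠ 0 := mod_cast (h.sin_pos 2).ne'
  have hE₀ := Complex.exp_ne_zero (θ 0 * Complex.I)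
  have hcases : s 0 = 1 ∧ s 2 = 0 ∨ s 0 = 0 ∧ s 2 = 1 := by
    revert s
    decide
  rw [h.one_sub_conj_apex, h.one_sub_apex, conj_apex, apex, turn, hs, Units.val_one,
    zpow_neg_one, h.inv_exp_two, Complex.ofReal_div, Complex.ofReal_div, Complex.ofReal_div]
  rcases hcases with ⟨hs₀, hs₂⟩ | ⟨hs₀, hs₂⟩ <;> rw [hs₀, hs₂]
  · left
    field_simp
  · right
    field_simp

end IsTriangleAngles

end Turns

section TurningPentagons

open ComplexConjugate

/-- The closed pentagon with the edges `z 0, …, z 4` has at its `i`-th corner consecutive edges that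
span a triangle with the angles `θ`, labelled by `s i` and oriented by `ε i`. -/
structure TurningPentagon (θ : Fin 3 → ℝ) (s : Fin 5 → Equiv.Perm (Fin 3)) (ε : Fin 5 → ℤˣ)
    (z : Fin 5 → ℂ) : Prop where
  ne_zero : ∀ i, z i ≠ 0
  sum_eq_zero : ∑ i, z i = 0
  edge_succ : ∀ i, z (i + 1) = z i * turn θ (s i) (ε i)

variable {θ : Fin 3 → ℝ} {s : Fin 5 → Equiv.Perm (Fin 3)} {ε : Fin 5 → ℤˣ} {z : Fin 5 → ℂ}

namespace TurningPentagon

lemma rotate (hz : TurningPentagon θ s ε z) (k : Fin 5) :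
    TurningPentagon θ (fun i => s (i + k)) (fun i => ε (i + k)) (fun i => z (i + k)) where
  ne_zero i := hz.ne_zero (i + k)
  sum_eq_zero := by
    rw [← hz.sum_eq_zero]
    exact Equiv.sum_comp (Equiv.addRight k) z
  edge_succ i := by rw [add_right_comm, hz.edge_succ]

lemma conjugate (hz : TurningPentagon θ s ε z) :
    TurningPentagon θ s (fun i => -ε i) (fun i => conj (z i)) where
  ne_zero i := (map_ne_zero _).2 (hz.ne_zero i)
  sum_eq_zero := by rw [← map_sum, hz.sum_eq_zero, map_zero]
  edge_succ i := by rw [hz.edge_succ, map_mul, conj_turn]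

lemma relabel (hz : TurningPentagon θ s ε z) (p : Equiv.Perm (Fin 3)) :
    TurningPentagon (θ ∘ p) (fun i => p⁻¹ * s i) ε z where
  ne_zero := hz.ne_zero
  sum_eq_zero := hz.sum_eq_zero
  edge_succ i := by rw [turn_comp_perm, mul_inv_cancel_left, hz.edge_succ]

lemma prod_turn_eq_one (hz : TurningPentagon θ s ε z) : ∏ i, turn θ (s i) (ε i) = 1 := by
  have hprod : ∏ i, z i ≠ 0 := Finset.prod_ne_zero_iff.2 fun i _ => hz.ne_zero i
  refine mul_left_cancel₀ hprod ?_
  rw [← Finset.prod_mul_distrib, mul_one, ← Equiv.prod_comp (Equiv.addRight (1 : Fin 5)) z]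
  exact Finset.prod_congr rfl fun i _ => (hz.edge_succ i).symm

lemma sin_sum_eq_zero (hz : TurningPentagon θ s ε z) (h : IsTriangleAngles θ) :
    Real.sin (∑ i, ε i * θ (s i 1)) = 0 := by
  set R : ℝ := ∏ i, Real.sin (θ (s i 0)) / Real.sin (θ (s i 2)) with hR
  have hRpos : 0 < R := Finset.prod_pos fun i _ => div_pos (h.sin_pos _) (h.sin_pos _)
  have hprod : -(R * Complex.exp ((-∑ i, ε i * θ (s i 1) : ℝ) * Complex.I)) = 1 := by
    rw [← hz.prod_turn_eq_one]
    simp only [turn, Finset.prod_neg, Finset.prod_mul_distrib, Finset.card_univ, Fintype.card_fin,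
      ← Complex.exp_int_mul, ← Complex.exp_sum, hR]
    push_cast [Finset.sum_mul, ← Finset.sum_neg_distrib]
    simp only [neg_mul, mul_assoc]
    ring
  have him := congrArg Complex.im hprod
  rw [Complex.neg_im, Complex.im_ofReal_mul, Complex.exp_ofReal_mul_I_im, Real.sin_neg] at him
  simpa [hRpos.ne'] using him

end TurningPentagon

/-- The coefficient of `θ j` in the total turning `∑ i, ε i * θ (s i 1)` of a pentagon. -/
def angleCount (s : Fin 5 → Equiv.Perm (Fin 3)) (ε : Fin 5 → ℤˣ) (j : Fin 3) : ℤ :=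
  ∑ i, if s i 1 = j then (ε i : ℤ) else 0

section AngleCount

variable (s ε)

lemma sum_angleCount_mul (θ : Fin 3 → ℝ) :
    ∑ j, angleCount s ε j * θ j = ∑ i, ε i * θ (s i 1) := by
  simp only [angleCount, Int.cast_sum, Finset.sum_mul]
  rw [Finset.sum_comm]
  simp

lemma sum_angleCount : ∑ j, angleCount s ε j = ∑ i, (ε i : ℤ) := by
  simp only [angleCount]
  rw [Finset.sum_comm]
  simp

lemma abs_angleCount_le (j : Fin 3) : |angleCount s ε j| ≤ 5 := by
  calc |angleCount s ε j| ≤ ∑ i, |if s i 1 = j then (ε i : ℤ) else 0| :=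
        Finset.abs_sum_le_sum_abs _ _
    _ ≤ ∑ i : Fin 5, 1 := Finset.sum_le_sum fun i _ => by
        split_ifs
        · rw [Int.isUnit_iff_abs_eq.1 (ε i).isUnit]
        · simp
    _ = 5 := by simp

lemma angleCount_rotate (k : Fin 5) (j : Fin 3) :
    angleCount (fun i => s (i + k)) (fun i => ε (i + k)) j = angleCount s ε j :=
  Equiv.sum_comp (Equiv.addRight k) fun i => if s i 1 = j then (ε i : ℤ) else 0

lemma angleCount_neg (j : Fin 3) : angleCount s (fun i => -ε i) j = -angleCount s ε j := by
  simp only [angleCount, ← Finset.sum_neg_distrib]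
  refine Finset.sum_congr rfl fun i _ => ?_
  split_ifs <;> simp

lemma angleCount_relabel (p : Equiv.Perm (Fin 3)) (j : Fin 3) :
    angleCount (fun i => p⁻¹ * s i) ε j = angleCount s ε (p j) := by
  simp only [angleCount, Equiv.Perm.mul_apply, Equiv.Perm.inv_eq_iff_eq]

end AngleCount

lemma exists_single_opposite_sign (ε : Fin 5 → ℤˣ) (h : 3 ∣ ∑ i, (ε i : ℤ)) :
    ∃ k η, ∀ i, ε i = if i = k then -η else η := by
  revert ε
  decide

lemma exists_perm_comp_eq_of_counts (f : Fin 4 → Fin 3)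
    (h : ∀ j, (∑ i, if f i = j then (1 : ℤ) else 0) = ![2, 1, 1] j) :
    ∃ π : Equiv.Perm (Fin 4), f ∘ π = ![0, 0, 1, 2] := by
  revert f
  decide

lemma sum_corners_of_angleCount_eq (hε : ∀ i : Fin 4, ε i.castSucc = 1)
    (hlast : ε (Fin.last 4) = -1) (hs : s (Fin.last 4) = Equiv.swap 0 1)
    (hcount : ∀ j k, angleCount s ε j = angleCount s ε k) (j : Fin 3) :
    (∑ i : Fin 4, if s i.castSucc 1 = j then (1 : ℤ) else 0) = ![2, 1, 1] j := by
  have hone : angleCount s ε j = 1 := by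
    have hsum := sum_angleCount s ε
    rw [Fin.sum_univ_three, hcount 0 j, hcount 1 j, hcount 2 j, Fin.sum_univ_castSucc] at hsum
    simp only [hε, hlast, Units.val_one, Units.val_neg, Finset.sum_const, Finset.card_univ,
      Fintype.card_fin, nsmul_eq_mul] at hsum
    norm_num at hsum
    omega
  rw [angleCount, Fin.sum_univ_castSucc, hlast, hs, Equiv.swap_apply_right] at hone
  simp only [hε, Units.val_one, Units.val_neg] at hone
  rw [eq_sub_of_add_eq hone]
  fin_cases j <;> rfl

namespace TurningPentagon

lemma hasAngleRelation_of_angleCount_ne (hz : TurningPentagon θ s ε z) (h : IsTriangleAngles θ)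
    {j k : Fin 3} (hjk : angleCount s ε j ≠ angleCount s ε k) : HasAngleRelation θ := by
  obtain ⟨m, hm⟩ := Real.sin_eq_zero_iff.1 (hz.sin_sum_eq_zero h)
  exact ⟨angleCount s ε, abs_angleCount_le s ε, ⟨j, k, hjk⟩, m, by rw [sum_angleCount_mul, hm]⟩

lemma prod_eq_and_closing_of_last_turn (hz : TurningPentagon θ s ε z) {r : Fin 4 → ℂ} {x : ℂ}
    (hx : x ≠ 0) (hr : ∀ i : Fin 4, turn θ (s i.castSucc) (ε i.castSucc) = r i)
    (hlast : turn θ (s (Fin.last 4)) (ε (Fin.last 4)) = -x) :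
    ∏ i, r i = -1 / x ∧ 1 + r 0 + r 0 * r 1 + r 0 * r 1 * r 2 = 1 / x := by
  have h₁ : z 1 = z 0 * r 0 := hr 0 ▸ hz.edge_succ 0
  have h₂ : z 2 = z 1 * r 1 := hr 1 ▸ hz.edge_succ 1
  have h₃ : z 3 = z 2 * r 2 := hr 2 ▸ hz.edge_succ 2
  have h₄ : z 4 = z 3 * r 3 := hr 3 ▸ hz.edge_succ 3
  have hprod : ∏ i, r i = -1 / x := by
    have := hz.prod_turn_eq_one
    rw [Fin.prod_univ_castSucc] at this
    simp only [hr, hlast] at this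
    rw [eq_div_iff hx]
    linear_combination -this
  refine ⟨hprod, mul_left_cancel₀ (hz.ne_zero 0) ?_⟩
  have hsum := hz.sum_eq_zero
  rw [Fin.sum_univ_five, h₄, h₃, h₂, h₁] at hsum
  rw [Fin.prod_univ_four] at hprod
  linear_combination hsum - z 0 * hprod

lemma hasAngleRelation_of_negative_last (hz : TurningPentagon θ s ε z) (h : IsTriangleAngles θ)
    (hε : ∀ i : Fin 4, ε i.castSucc = 1) (hlast : ε (Fin.last 4) = -1)
    (hs : s (Fin.last 4) = Equiv.swap 0 1)
    (hcount : ∀ j k, angleCount s ε j = angleCount s ε k) : HasAngleRelation θ := by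
  obtain ⟨π, hπ⟩ := exists_perm_comp_eq_of_counts (fun i => s i.castSucc 1)
    (sum_corners_of_angleCount_eq hε hlast hs hcount)
  let r : Fin 4 → ℂ := fun i => turn θ (s i.castSucc) 1
  obtain ⟨hprod, hclose⟩ := hz.prod_eq_and_closing_of_last_turn (r := r)
    h.conjugatePair_apex.ne_zero (fun i => by rw [hε]) (by rw [hs, hlast, turn_swap_neg_one])
  have hperm : [r 0, r 1, r 2, r 3].Perm [r (π 0), r (π 1), r (π 2), r (π 3)] := by
    simpa [List.ofFn_succ] using (Equiv.Perm.ofFn_comp_perm π r).symm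
  refine h.hasAngleRelation_of_isExceptional <| isExceptional_of_closing h.conjugatePair_apex
    (apex_mul_conj_ne_neg_one θ) (h.turn_one_of_apply_one_eq_zero (congrFun hπ 0))
    (h.turn_one_of_apply_one_eq_zero (congrFun hπ 1))
    (h.turn_one_of_apply_one_eq_one (congrFun hπ 2))
    (h.turn_one_of_apply_one_eq_two (congrFun hπ 3)) hperm ?_ hclose
  rw [← hprod, ← Equiv.prod_comp π, Fin.prod_univ_four]

lemma hasAngleRelation_of_negative_corner (hz : TurningPentagon θ s ε z) (h : IsTriangleAngles θ)
    {k : Fin 5} (hε : ∀ i, ε i = if i = k then -1 else 1)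
    (hcount : ∀ j l, angleCount s ε j = angleCount s ε l) : HasAngleRelation θ := by
  have last_add_succ : Fin.last 4 + (k + 1) = k :=
    (by decide : ∀ k : Fin 5, Fin.last 4 + (k + 1) = k) k
  set p := s k * Equiv.swap 0 1 with hp
  refine HasAngleRelation.of_comp_perm p
    (((hz.rotate (k + 1)).relabel p).hasAngleRelation_of_negative_last (h.comp_perm p)
      (fun i => ?_) ?_ ?_ fun j l => ?_)
  · rw [hε, if_neg ((by decide : ∀ (i : Fin 4) (k : Fin 5), i.castSucc + (k + 1) ≠ k) i k)]
  · rw [last_add_succ, hε, if_pos rfl]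
  · rw [last_add_succ, hp, mul_inv_rev, inv_mul_cancel_right, Equiv.swap_inv]
  · rw [angleCount_relabel, angleCount_relabel, angleCount_rotate, angleCount_rotate]
    exact hcount _ _

theorem hasAngleRelation (hz : TurningPentagon θ s ε z) (h : IsTriangleAngles θ) :
    HasAngleRelation θ := by
  by_cases hcount : ∀ j k, angleCount s ε j = angleCount s ε k
  · have hdvd : 3 ∣ ∑ i, (ε i : ℤ) := by
      rw [← sum_angleCount, Fin.sum_univ_three, hcount 1 0, hcount 2 0]
      exact ⟨angleCount s ε 0, by ring⟩
    obtain ⟨k, η, hε⟩ := exists_single_opposite_sign ε hdvd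
    rcases Int.units_eq_one_or η with rfl | rfl
    · exact hz.hasAngleRelation_of_negative_corner h hε hcount
    · refine hz.conjugate.hasAngleRelation_of_negative_corner h (k := k) (fun i => ?_)
        fun j l => by rw [angleCount_neg, angleCount_neg, hcount j l]
      rw [hε]
      split_ifs <;> simp
  · push Not at hcount
    obtain ⟨j, k, hjk⟩ := hcount
    exact hz.hasAngleRelation_of_angleCount_ne h hjk

end TurningPentagon

end TurningPentagons

section Geometry

lemma exists_eq_norm_mul_exp_abs_arg_zpow (w : ℂ) :
    ∃ ε : ℤˣ, w = ‖w‖ * Complex.exp ((|w.arg| : ℝ) * Complex.I) ^ (-(ε : ℤ)) := by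
  rcases abs_choice w.arg with harg | harg
  · refine ⟨-1, ?_⟩
    rw [harg, Units.val_neg, Units.val_one, neg_neg, zpow_one, Complex.norm_mul_exp_arg_mul_I]
  · refine ⟨1, ?_⟩
    rw [harg, Units.val_one, zpow_neg_one, ← Complex.exp_neg, Complex.ofReal_neg, neg_mul, neg_neg,
      Complex.norm_mul_exp_arg_mul_I]

lemma exists_sub_eq_mul_turn {θ : Fin 3 → ℝ} {s : Equiv.Perm (Fin 3)} {a b c : ℂ} (hab : a ≠ b)
    (hbc : b ≠ c) (hA : ∠ b a c = θ (s 0)) (hB : ∠ c b a = θ (s 1)) (hC : ∠ a c b = θ (s 2))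
    (hsin : Real.sin (θ (s 2)) ≠ 0) : ∃ ε, c - b = (b - a) * turn θ s ε := by
  have hba : a - b ≠ 0 := sub_ne_zero.2 hab
  obtain ⟨ε, hε⟩ := exists_eq_norm_mul_exp_abs_arg_zpow ((c - b) / (a - b))
  have harg : |((c - b) / (a - b)).arg| = θ (s 1) := by
    rw [← Complex.angle_eq_abs_arg (sub_ne_zero.2 hbc.symm) hba, ← hB]
    rfl
  have hnorm : ‖(c - b) / (a - b)‖ = Real.sin (θ (s 0)) / Real.sin (θ (s 2)) := by
    have hlaw := EuclideanGeometry.law_sin a c b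
    rw [hA, hC, dist_eq_norm, dist_comm, dist_eq_norm] at hlaw
    rw [norm_div, div_eq_div_iff (norm_ne_zero_iff.2 hba) hsin]
    linear_combination hlaw
  rw [hnorm, harg, div_eq_iff hba] at hε
  refine ⟨ε, hε.trans ?_⟩
  rw [turn]
  ring

/-- The identification of the plane with `ℂ`. -/
def planeIsometryComplex : Plane ≃ₗᵢ[ℝ] ℂ := Complex.orthonormalBasisOneI.repr.symm

lemma angle_planeIsometryComplex (a b c : Plane) :
    ∠ (planeIsometryComplex a) (planeIsometryComplex b) (planeIsometryComplex c) = ∠ a b c :=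
  planeIsometryComplex.toLinearIsometry.toAffineIsometry.angle_map a b c

lemma isTriangleAngles_triAngle {T : Fin 3 → Plane} (hT : IsTriangle T) :
    IsTriangleAngles (triAngle T) where
  pos j := by
    have hcover : ∀ j k : Fin 3, k = j + 1 ∨ k = j ∨ k = j + 2 := by decide
    refine EuclideanGeometry.angle_pos_of_not_collinear fun hcol => hT (hcol.subset ?_)
    rintro _ ⟨k, rfl⟩
    rcases hcover j k with rfl | rfl | rfl <;> simp
  sum_eq_pi := by
    have hne : T 0 ≠ T 1 := fun h => by
      simpa using (affineIndependent_iff_not_collinear.2 hT).injective h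
    rw [add_right_comm]
    exact EuclideanGeometry.angle_add_angle_add_angle_eq_pi (T 2) hne

lemma exists_turningPentagon {T : Fin 3 → Plane} (hT : IsTriangle T) {q : Fin 5 → Plane}
    (hq : Function.Injective q)
    (hsim : ∀ i : Fin 5, TripleSimilar T (q i) (q (i + 1)) (q (i + 2))) :
    ∃ s ε z, TurningPentagon (triAngle T) s ε z := by
  choose _ s hs using hsim
  have add_one_add_one : ∀ i : Fin 5, i + 1 + 1 = i + 2 := by decide
  have hne (i : Fin 5) : q i ≠ q (i + 1) := hq.ne ((by decide : ∀ i : Fin 5, i ≠ i + 1) i)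
  let w (i : Fin 5) : ℂ := planeIsometryComplex (q i)
  have hw (i : Fin 5) : w i ≠ w (i + 1) := planeIsometryComplex.injective.ne (hne i)
  have hturn (i : Fin 5) : ∃ ε, w (i + 2) - w (i + 1) = (w (i + 1) - w i) *
      turn (triAngle T) (s i) ε := by
    refine exists_sub_eq_mul_turn (hw i) ?_ ?_ ?_ ?_
      ((isTriangleAngles_triAngle hT).sin_pos _).ne'
    · exact add_one_add_one i ▸ hw (i + 1)
    · exact (angle_planeIsometryComplex _ _ _).trans (hs i 0)
    · exact (angle_planeIsometryComplex _ _ _).trans (hs i 1)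
    · exact (angle_planeIsometryComplex _ _ _).trans (hs i 2)
  choose ε hε using hturn
  refine ⟨s, ε, fun i => w (i + 1) - w i, fun i => sub_ne_zero.2 (hw i).symm, ?_, fun i => ?_⟩
  · rw [Finset.sum_sub_distrib, sub_eq_zero]
    exact Equiv.sum_comp (Equiv.addRight (1 : Fin 5)) w
  · rw [← hε, add_one_add_one]

end Geometry

/-- If `q₁, …, q₅` are five distinct points such that each triangle
`qᵢq_{i+1}q_{i+2}` (indices mod 5) is similar to the non-degenerate triangle `T`,
then the angles of `T` satisfy a non-trivial linear equation. -/
theorem stmt_13 (T : Fin 3 → Plane) (hT : IsTriangle T)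
    (q : Fin 5 → Plane) (hq : Function.Injective q)
    (hsim : ∀ i : Fin 5, TripleSimilar T (q i) (q (i + 1)) (q (i + 2))) :
    SatisfiesNontrivLinear (triAngle T 0) (triAngle T 1) (triAngle T 2) := by
  obtain ⟨s, ε, z, hz⟩ := exists_turningPentagon hT hq hsim
  have hangles := isTriangleAngles_triAngle hT
  exact hangles.satisfiesNontrivLinear (hz.hasAngleRelation hangles)

end
end

section
/- Let q₁, q₂, q₃, q₄, q₅ be points in ℝ², not all equal. Then it is not the case that each of the four triples (q₁, q₂, q₃), (q₁, q₂, q₄), (q₁, q₃, q₅), (q₂, q₄, q₅) has all three of its pairwise distances equal. -/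
/-!
Each of the triples `124`, `135`, `245` shares a pair of points with an earlier one in the list
`123`, `124`, `135`, `245`, so all the distances within triples equal a common `r`. In particular
`q₁, q₂, q₃, q₅` are pairwise at distance `r`. Were `r ≠ 0`, they would be affinely independent, as
the vertices of a regular tetrahedron, which a plane has no room for. Hence `r = 0` and all five
points coincide.
-/

section Equidistant

variable {ι V P : Type*} [NormedAddCommGroup V] [InnerProductSpace ℝ V] [MetricSpace P]
  [NormedAddTorsor V P] {p : ι → P} {r : ℝ}

theorem norm_weightedVSub_sq_of_pairwise_dist_eq (hp : Pairwise fun i j ↦ dist (p i) (p j) = r)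
    {s : Finset ι} {w : ι → ℝ} (hw : ∑ i ∈ s, w i = 0) :
    ‖s.weightedVSub p w‖ ^ 2 = r ^ 2 / 2 * ∑ i ∈ s, w i ^ 2 := by
  classical
  have dist_mul_dist (i j : ι) :
      dist (p i) (p j) * dist (p i) (p j) = r ^ 2 - if i = j then r ^ 2 else 0 := by
    obtain rfl | hij := eq_or_ne i j
    · simp
    · simp [hp hij, hij, sq]
  have inner_sum (i : ι) (hi : i ∈ s) :
      ∑ j ∈ s, w i * w j * (dist (p i) (p j) * dist (p i) (p j)) = -(r ^ 2 * w i ^ 2) := by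
    simp only [dist_mul_dist, mul_sub, Finset.sum_sub_distrib, ← Finset.sum_mul, ← Finset.mul_sum,
      hw, mul_ite, mul_zero, zero_mul, Finset.sum_ite_eq, if_pos hi]
    ring
  rw [← real_inner_self_eq_norm_sq, EuclideanGeometry.inner_weightedVSub p hw p hw,
    Finset.sum_congr rfl inner_sum, Finset.sum_neg_distrib, ← Finset.mul_sum]
  ring

theorem affineIndependent_of_pairwise_dist_eq (hp : Pairwise fun i j ↦ dist (p i) (p j) = r)
    (hr : r ≠ 0) : AffineIndependent ℝ p := by
  intro s w hw hzero i hi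
  have sum_sq : ∑ i ∈ s, w i ^ 2 = 0 := by
    simpa [hzero, hr] using norm_weightedVSub_sq_of_pairwise_dist_eq hp hw
  exact pow_eq_zero_iff two_ne_zero |>.mp <|
    (Finset.sum_eq_zero_iff_of_nonneg fun j _ ↦ sq_nonneg (w j)).mp sum_sq i hi

theorem eq_zero_of_pairwise_dist_eq_of_finrank_add_one_lt_card [Fintype ι] [FiniteDimensional ℝ V]
    (hp : Pairwise fun i j ↦ dist (p i) (p j) = r)
    (hcard : Module.finrank ℝ V + 1 < Fintype.card ι) : r = 0 := by
  by_contra hr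
  have card_le := (affineIndependent_of_pairwise_dist_eq hp hr).card_le_finrank_succ
  have finrank_le := (vectorSpan ℝ (Set.range p)).finrank_le
  omega

end Equidistant

theorem pairwise_dist_vecCons_four {X : Type*} [PseudoMetricSpace X] {a b c d : X} {r : ℝ}
    (hab : dist a b = r) (hac : dist a c = r) (had : dist a d = r)
    (hbc : dist b c = r) (hbd : dist b d = r) (hcd : dist c d = r) :
    Pairwise fun i j ↦ dist (![a, b, c, d] i) (![a, b, c, d] j) = r := by
  intro i j hij
  fin_cases i <;> fin_cases j <;> simp_all [dist_comm]

theorem stmt_14_general {V P : Type*} [NormedAddCommGroup V] [InnerProductSpace ℝ V]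
    [FiniteDimensional ℝ V] [MetricSpace P] [NormedAddTorsor V P]
    (hV : Module.finrank ℝ V ≤ 2) (q₁ q₂ q₃ q₄ q₅ : P)
    (hne : ¬(q₁ = q₂ ∧ q₁ = q₃ ∧ q₁ = q₄ ∧ q₁ = q₅)) :
    ¬((dist q₁ q₂ = dist q₂ q₃ ∧ dist q₂ q₃ = dist q₃ q₁) ∧
      (dist q₁ q₂ = dist q₂ q₄ ∧ dist q₂ q₄ = dist q₄ q₁) ∧
      (dist q₁ q₃ = dist q₃ q₅ ∧ dist q₃ q₅ = dist q₅ q₁) ∧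
      (dist q₂ q₄ = dist q₄ q₅ ∧ dist q₄ q₅ = dist q₅ q₂)) := by
  rintro ⟨⟨h12_23, h23_31⟩, ⟨h12_24, h24_41⟩, ⟨h13_35, h35_51⟩, ⟨h24_45, h45_52⟩⟩
  have d23 : dist q₂ q₃ = dist q₁ q₂ := h12_23.symm
  have d13 : dist q₁ q₃ = dist q₁ q₂ := by rw [dist_comm, ← h23_31, d23]
  have d14 : dist q₁ q₄ = dist q₁ q₂ := by rw [dist_comm, ← h24_41, h12_24]
  have d35 : dist q₃ q₅ = dist q₁ q₂ := by rw [← h13_35, d13]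
  have d15 : dist q₁ q₅ = dist q₁ q₂ := by rw [dist_comm, ← h35_51, d35]
  have d25 : dist q₂ q₅ = dist q₁ q₂ := by rw [dist_comm q₂, ← h45_52, ← h24_45, h12_24]
  have d12 : dist q₁ q₂ = 0 :=
    eq_zero_of_pairwise_dist_eq_of_finrank_add_one_lt_card
      (pairwise_dist_vecCons_four rfl d13 d15 d23 d25 d35)
      (by rw [Fintype.card_fin]; omega)
  exact hne ⟨dist_eq_zero.mp d12, dist_eq_zero.mp (d13.trans d12),
    dist_eq_zero.mp (d14.trans d12), dist_eq_zero.mp (d15.trans d12)⟩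

/-- If `q₁, …, q₅` are points of the plane, not all equal, then the four triples
`(q₁,q₂,q₃), (q₁,q₂,q₄), (q₁,q₃,q₅), (q₂,q₄,q₅)` (the hypergraph `C₅⁻`) cannot
all have their three pairwise distances equal. -/
theorem stmt_14 (q₁ q₂ q₃ q₄ q₅ : EuclideanSpace ℝ (Fin 2))
    (hne : ¬(q₁ = q₂ ∧ q₁ = q₃ ∧ q₁ = q₄ ∧ q₁ = q₅)) :
    ¬((dist q₁ q₂ = dist q₂ q₃ ∧ dist q₂ q₃ = dist q₃ q₁) ∧
      (dist q₁ q₂ = dist q₂ q₄ ∧ dist q₂ q₄ = dist q₄ q₁) ∧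
      (dist q₁ q₃ = dist q₃ q₅ ∧ dist q₃ q₅ = dist q₅ q₁) ∧
      (dist q₂ q₄ = dist q₄ q₅ ∧ dist q₄ q₅ = dist q₅ q₂)) :=
  stmt_14_general finrank_euclideanSpace_fin.le q₁ q₂ q₃ q₄ q₅ hne
end

section
/- Let ε = 1/50 (radians). Suppose u, v, w ∈ ℝ² are three non-collinear points such that each of the three angles of the triangle uvw differs from π/3 by less than ε. Let q⁺ be the image of v under the rotation about u by angle π/3 (anti-clockwise) and q⁻ the image of v under the rotation about u by angle −π/3 (clockwise). Then dist(w, q⁺) ≤ 1.2·ε·dist(u, v) or dist(w, q⁻) ≤ 1.2·ε·dist(u, v). -/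
open EuclideanGeometry

/-!
Scale the triangle to circumdiameter one and write its angles as `π/3 + a`, `π/3 + b`, `π/3 + c`
with `a + b + c = 0`. The squared distance from `w` to the apex of the equilateral triangle erected
on `uv` on the side of `w` is then the symmetric expression
`(sin² a + sin² b + sin² c) / 2 - √3 sin a sin b sin c`. When the deviations are at most `ε` in
absolute value, the constraint `a + b + c = 0` forces `a² + b² + c² ≤ 2ε²`, so this expression is at
most `ε² (1 + √3 ε)`, whereas the side `uv`, of length `sin (π/3 + c)`, is at least `sin (π/3 - ε)`.
-/

section

open Real

theorem sq_add_sq_add_sq_le_of_add_eq_zero {R : Type*} [CommRing R] [LinearOrder R]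
    [IsStrictOrderedRing R] {a b c ε : R} (h : a + b + c = 0)
    (ha : |a| ≤ ε) (hb : |b| ≤ ε) (hc : |c| ≤ ε) : a ^ 2 + b ^ 2 + c ^ 2 ≤ 2 * ε ^ 2 := by
  obtain ⟨ha₁, ha₂⟩ := abs_le.1 ha
  obtain ⟨hb₁, hb₂⟩ := abs_le.1 hb
  obtain ⟨hc₁, hc₂⟩ := abs_le.1 hc
  have h_upper : 0 ≤ (ε - a) * (ε - b) * (ε - c) :=
    mul_nonneg (mul_nonneg (sub_nonneg.2 ha₂) (sub_nonneg.2 hb₂)) (sub_nonneg.2 hc₂)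
  have h_lower : 0 ≤ (a - -ε) * (b - -ε) * (c - -ε) :=
    mul_nonneg (mul_nonneg (sub_nonneg.2 ha₁) (sub_nonneg.2 hb₁)) (sub_nonneg.2 hc₁)
  obtain rfl : c = -(a + b) := by linear_combination h
  rcases ((abs_nonneg a).trans ha).eq_or_lt with rfl | hε
  · simp [abs_nonpos_iff.1 ha, abs_nonpos_iff.1 hb]
  · -- Adding the two products cancels their odd parts, leaving `2 * ε * (ε² + ab + bc + ca)`.
    have h_sum : 0 ≤ ε * (2 * ε ^ 2 - (a ^ 2 + b ^ 2 + (-(a + b)) ^ 2)) := by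
      linear_combination h_upper + h_lower
    exact sub_nonneg.1 (nonneg_of_mul_nonneg_right h_sum hε)

theorem sin_sub_le_sin_add {x y ε : ℝ} (hx : x ≤ π / 2) (hε : ε ≤ x + π / 2) (hy : |y| ≤ ε) :
    sin (x - ε) ≤ sin (x + y) := by
  obtain ⟨hy₁, hy₂⟩ := abs_le.1 hy
  have h_sin : 0 ≤ sin ((x + y - (x - ε)) / 2) :=
    sin_nonneg_of_nonneg_of_le_pi (by linarith) (by linarith)
  have h_cos : 0 ≤ cos ((x + y + (x - ε)) / 2) :=
    cos_nonneg_of_neg_pi_div_two_le_of_le (by linarith) (by linarith)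
  rw [← sub_nonneg, sin_sub_sin]
  positivity

theorem law_cos_sin_pi_div_three_add_eq {a b c : ℝ} (h : a + b + c = 0) :
    sin (π / 3 + b) ^ 2 + sin (π / 3 + c) ^ 2 - 2 * sin (π / 3 + b) * sin (π / 3 + c) * cos a =
      (sin a ^ 2 + sin b ^ 2 + sin c ^ 2) / 2 - √3 * (sin a * sin b * sin c) := by
  obtain rfl : a = -(b + c) := by linear_combination h
  have h_sqrt : √3 ^ 2 = 3 := sq_sqrt (by norm_num)
  simp only [sin_neg, cos_neg, sin_add, cos_add, sin_pi_div_three, cos_pi_div_three]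
  have hb := sin_sq_add_cos_sq b
  have hc := sin_sq_add_cos_sq c
  grind

theorem law_cos_sin_pi_div_three_add_le {a b c ε : ℝ} (h : a + b + c = 0)
    (ha : |a| ≤ ε) (hb : |b| ≤ ε) (hc : |c| ≤ ε) :
    sin (π / 3 + b) ^ 2 + sin (π / 3 + c) ^ 2 - 2 * sin (π / 3 + b) * sin (π / 3 + c) * cos a ≤
      ε ^ 2 * (1 + √3 * ε) := by
  have hε : 0 ≤ ε := (abs_nonneg a).trans ha
  have sin_sq_le (x : ℝ) : sin x ^ 2 ≤ x ^ 2 := sq_le_sq.2 abs_sin_le_abs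
  have h_squares : sin a ^ 2 + sin b ^ 2 + sin c ^ 2 ≤ 2 * ε ^ 2 := by
    linarith [sin_sq_le a, sin_sq_le b, sin_sq_le c,
      sq_add_sq_add_sq_le_of_add_eq_zero h ha hb hc]
  have h_product : |sin a * sin b * sin c| ≤ ε * ε * ε := by
    rw [abs_mul, abs_mul]
    gcongr
    exacts [abs_sin_le_abs.trans ha, abs_sin_le_abs.trans hb, abs_sin_le_abs.trans hc]
  calc _ = (sin a ^ 2 + sin b ^ 2 + sin c ^ 2) / 2 - √3 * (sin a * sin b * sin c) :=
        law_cos_sin_pi_div_three_add_eq h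
    _ ≤ 2 * ε ^ 2 / 2 - √3 * -(ε * ε * ε) := by
        gcongr
        exact (abs_le.1 h_product).1
    _ = ε ^ 2 * (1 + √3 * ε) := by ring

theorem sin_pi_div_three_sub_pos {ε : ℝ} (hε₀ : 0 ≤ ε) (hε : ε < π / 3) :
    0 < sin (π / 3 - ε) :=
  sin_pos_of_pos_of_lt_pi (by linarith) (by linarith [pi_pos])

/-- An upper bound for the distance from the apex of a triangle to the apex of the equilateral
triangle on the same base, relative to the length of the base, when all angles of the triangle are
within `ε` of `π / 3`. It is meaningful for `0 ≤ ε < π / 3`. -/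
noncomputable def apexErrorRatio (ε : ℝ) : ℝ :=
  ε * √(1 + √3 * ε) / sin (π / 3 - ε)

theorem apexErrorRatio_nonneg {ε : ℝ} (hε₀ : 0 ≤ ε) (hε : ε < π / 3) :
    0 ≤ apexErrorRatio ε := by
  have := sin_pi_div_three_sub_pos hε₀ hε
  unfold apexErrorRatio
  positivity

theorem apexErrorRatio_le {ε : ℝ} (hε₀ : 0 ≤ ε) (hε : ε ≤ 1 / 50) :
    apexErrorRatio ε ≤ 1.2 * ε := by
  have h_sqrt_three_ge : 1.732 ≤ √3 := le_sqrt_of_sq_le (by norm_num)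
  have h_sqrt_three_le : √3 ≤ 1.7321 := sqrt_le_iff.2 (by norm_num)
  have h_num : √(1 + √3 * ε) ≤ 1.02 := sqrt_le_iff.2 ⟨by norm_num, by nlinarith⟩
  have h_cos : 0.9998 ≤ cos ε := by
    nlinarith [one_sub_sq_div_two_le_cos (x := ε)]
  have h_den : 0.855 ≤ sin (π / 3 - ε) := by
    rw [sin_sub, sin_pi_div_three, cos_pi_div_three]
    nlinarith [sin_le hε₀]
  rw [apexErrorRatio, div_le_iff₀ (by linarith)]
  nlinarith

theorem law_cos_le_apexErrorRatio_mul_sq {a b c ε x y : ℝ} (h : a + b + c = 0) (hε : ε < π / 3)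
    (ha : |a| ≤ ε) (hb : |b| ≤ ε) (hc : |c| ≤ ε)
    (h_law_sin : x * sin (π / 3 + c) = y * sin (π / 3 + b)) :
    x ^ 2 + y ^ 2 - 2 * x * y * cos a ≤ (apexErrorRatio ε * y) ^ 2 := by
  have hε₀ : 0 ≤ ε := (abs_nonneg a).trans ha
  have h_den : 0 < sin (π / 3 - ε) := sin_pi_div_three_sub_pos hε₀ hε
  have h_sin_c : sin (π / 3 - ε) ≤ sin (π / 3 + c) :=
    sin_sub_le_sin_add (by linarith [pi_pos]) (by linarith [pi_pos]) hc
  have h_ratio : (apexErrorRatio ε * sin (π / 3 - ε)) ^ 2 = ε ^ 2 * (1 + √3 * ε) := by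
    rw [apexErrorRatio, div_mul_cancel₀ _ h_den.ne', mul_pow, sq_sqrt (by positivity)]
  refine le_of_mul_le_mul_right ?_ (pow_pos (h_den.trans_le h_sin_c) 2)
  calc (x ^ 2 + y ^ 2 - 2 * x * y * cos a) * sin (π / 3 + c) ^ 2
      = y ^ 2 * (sin (π / 3 + b) ^ 2 + sin (π / 3 + c) ^ 2 -
          2 * sin (π / 3 + b) * sin (π / 3 + c) * cos a) := by
        linear_combination (x * sin (π / 3 + c) + y * sin (π / 3 + b) -
          2 * y * sin (π / 3 + c) * cos a) * h_law_sin
    _ ≤ y ^ 2 * (apexErrorRatio ε * sin (π / 3 - ε)) ^ 2 := by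
        rw [h_ratio]
        gcongr
        exact law_cos_sin_pi_div_three_add_le h ha hb hc
    _ = (apexErrorRatio ε * y) ^ 2 * sin (π / 3 - ε) ^ 2 := by ring
    _ ≤ (apexErrorRatio ε * y) ^ 2 * sin (π / 3 + c) ^ 2 := by gcongr

theorem norm_sub_exp_mul_I_sq (z : ℂ) (θ : ℝ) :
    ‖z - Complex.exp (θ * Complex.I)‖ ^ 2 = ‖z‖ ^ 2 + 1 - 2 * ‖z‖ * cos (z.arg - θ) := by
  rw [← Complex.normSq_eq_norm_sq, ← Complex.normSq_eq_norm_sq, Complex.normSq_apply,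
    Complex.normSq_apply, cos_sub, Complex.sub_re, Complex.sub_im,
    Complex.exp_ofReal_mul_I_re, Complex.exp_ofReal_mul_I_im]
  linear_combination 2 * cos θ * Complex.norm_mul_cos_arg z +
    2 * sin θ * Complex.norm_mul_sin_arg z + sin_sq_add_cos_sq θ

theorem dist_add_exp_mul_sub_sq {u v : ℂ} (w : ℂ) (huv : u ≠ v) (θ : ℝ) :
    dist w (u + Complex.exp (θ * Complex.I) * (v - u)) ^ 2 =
      dist u w ^ 2 + dist u v ^ 2 -
        2 * dist u w * dist u v * cos (((w - u) / (v - u)).arg - θ) := by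
  have hvu : v - u ≠ 0 := sub_ne_zero.2 huv.symm
  obtain ⟨z, rfl⟩ : ∃ z, w = u + z * (v - u) := ⟨(w - u) / (v - u), by field_simp; ring⟩
  have h_dist (e : ℂ) : dist (u + z * (v - u)) (u + e * (v - u)) = ‖z - e‖ * dist u v := by
    rw [dist_add_left, dist_eq_norm, ← sub_mul, norm_mul, dist_comm u v, dist_eq_norm]
  have h_dist_u : dist u (u + z * (v - u)) = ‖z‖ * dist u v := by
    simpa [dist_comm u] using h_dist 0
  rw [h_dist, h_dist_u, add_sub_cancel_left, mul_div_cancel_right₀ _ hvu, mul_pow,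
    norm_sub_exp_mul_I_sq]
  ring

theorem dist_add_exp_mul_sub_sq_eq_or {u v w : ℂ} (huv : u ≠ v) (huw : u ≠ w) (θ : ℝ) :
    dist w (u + Complex.exp (θ * Complex.I) * (v - u)) ^ 2 =
        dist u w ^ 2 + dist u v ^ 2 - 2 * dist u w * dist u v * cos (∠ v u w - θ) ∨
      dist w (u + Complex.exp (-θ * Complex.I) * (v - u)) ^ 2 =
        dist u w ^ 2 + dist u v ^ 2 - 2 * dist u w * dist u v * cos (∠ v u w - θ) := by
  have h_angle : ∠ v u w = |((w - u) / (v - u)).arg| := by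
    rw [angle_comm]
    exact Complex.angle_eq_abs_arg (sub_ne_zero.2 huw.symm) (sub_ne_zero.2 huv.symm)
  rw [h_angle]
  rcases le_total 0 ((w - u) / (v - u)).arg with h_arg | h_arg
  · left
    rw [dist_add_exp_mul_sub_sq w huv, abs_of_nonneg h_arg]
  · right
    rw [← Complex.ofReal_neg, dist_add_exp_mul_sub_sq w huv, abs_of_nonpos h_arg, ← neg_add',
      cos_neg, sub_neg_eq_add]

theorem stmt_17_general {u v w : ℂ} {ε : ℝ} (huvw : ¬ Collinear ℝ ({u, v, w} : Set ℂ))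
    (hε : ε < π / 3) (ha : |∠ v u w - π / 3| ≤ ε) (hb : |∠ u v w - π / 3| ≤ ε)
    (hc : |∠ u w v - π / 3| ≤ ε) :
    dist w (u + Complex.exp ((π / 3) * Complex.I) * (v - u)) ≤ apexErrorRatio ε * dist u v ∨
      dist w (u + Complex.exp (-(π / 3) * Complex.I) * (v - u)) ≤
        apexErrorRatio ε * dist u v := by
  have huv : u ≠ v := ne₁₂_of_not_collinear huvw
  have huw : u ≠ w := ne₁₃_of_not_collinear huvw
  have h_sum : (∠ v u w - π / 3) + (∠ u v w - π / 3) + (∠ u w v - π / 3) = 0 := by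
    have := angle_add_angle_add_angle_eq_pi w huv
    rw [angle_comm w v u] at this
    linarith
  have h_law_sin : dist u w * sin (π / 3 + (∠ u w v - π / 3)) =
      dist u v * sin (π / 3 + (∠ u v w - π / 3)) := by
    rw [add_sub_cancel, add_sub_cancel, dist_comm u v, angle_comm u v w]
    linarith [law_sin w v u]
  have h_apex := law_cos_le_apexErrorRatio_mul_sq h_sum hε ha hb hc h_law_sin
  have h_nonneg : 0 ≤ apexErrorRatio ε * dist u v :=
    mul_nonneg (apexErrorRatio_nonneg ((abs_nonneg _).trans ha) hε) dist_nonneg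
  have h_eq := dist_add_exp_mul_sub_sq_eq_or huv huw (π / 3)
  push_cast at h_eq
  exact h_eq.imp (fun h ↦ le_of_sq_le_sq (h.trans_le h_apex) h_nonneg)
    (fun h ↦ le_of_sq_le_sq (h.trans_le h_apex) h_nonneg)

end

/-- Let `ε = 1/50`. If `u, v, w` are non-collinear points of the plane (identified
with `ℂ`) such that each angle of the triangle `uvw` differs from `π/3` by less
than `ε`, then `w` is within distance `1.2·ε·dist u v` of one of the two points
obtained by rotating `v` about `u` by `±π/3`. -/
theorem stmt_17 (u v w : ℂ) (huvw : ¬ Collinear ℝ ({u, v, w} : Set ℂ))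
    (ha : |EuclideanGeometry.angle v u w - Real.pi / 3| < 1 / 50)
    (hb : |EuclideanGeometry.angle u v w - Real.pi / 3| < 1 / 50)
    (hc : |EuclideanGeometry.angle u w v - Real.pi / 3| < 1 / 50) :
    dist w (u + Complex.exp ((Real.pi / 3) * Complex.I) * (v - u)) ≤
        1.2 * (1 / 50) * dist u v ∨
      dist w (u + Complex.exp (-(Real.pi / 3) * Complex.I) * (v - u)) ≤
        1.2 * (1 / 50) * dist u v := by
  have h_bound : apexErrorRatio (1 / 50) * dist u v ≤ 1.2 * (1 / 50) * dist u v := by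
    gcongr
    exact apexErrorRatio_le (by norm_num) le_rfl
  exact (stmt_17_general huvw (by linarith [Real.pi_gt_three]) ha.le hb.le hc.le).imp
    h_bound.trans' h_bound.trans'
end

section
/- Let s ≥ 2 be an integer and let f : ℕ → ℝ be a non-negative sequence with f(n) = 0 for all n < s, f(s) = 1, such that (i) for all n ≥ s, f(n)/C(n, s) ≥ f(n+1)/C(n+1, s), and (ii) for all positive integers a, b, f(a·b) ≥ a·f(b) + f(a)·bˢ. Then there exists a real number γ such that f(n)/C(n, s) converges to γ as n → ∞, and for every natural number n one has γ·(nˢ − n)/s! ≥ f(n) ≥ γ·C(n, s). -/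
/-!
Monotonicity and non-negativity make `f n / C(n, s)` decrease to its infimum `γ`, which is the lower
bound. For the upper bound, take `a = n` and `b = n ^ k` in the inequality for `f (a * b)`. The
function `m ↦ m ^ s - m` satisfies it with equality, so by induction on `k` the ratio
`f m / (m ^ s - m)` at `m = n ^ k` is at least its value at `n`. Since `m ^ s - m ~ s! * C(m, s)`,
these ratios tend to `γ / s!` as `k → ∞`.
-/

open Asymptotics Filter Topology

theorem mul_pow_sub_self_le_mul_apply_pow {R : Type*} [CommRing R] [PartialOrder R]
    [IsOrderedRing R] {f : ℕ → R} {s n : ℕ} (hs : s ≠ 0) (hn : 0 < n) (hf_one : 0 ≤ f 1)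
    (hsuper : ∀ b : ℕ, 0 < b → (n : R) * f b + f n * (b : R) ^ s ≤ f (n * b)) (k : ℕ) :
    f n * (((n ^ k : ℕ) : R) ^ s - (n ^ k : ℕ)) ≤ ((n : R) ^ s - n) * f (n ^ k) := by
  have hn_one : 1 ≤ (n : R) := by simpa only [Nat.cast_one] using Nat.mono_cast (α := R) hn
  have hpow_sub_nonneg : 0 ≤ (n : R) ^ s - n := sub_nonneg.2 (le_self_pow₀ hn_one hs)
  induction k with
  | zero => simpa using mul_nonneg hpow_sub_nonneg hf_one
  | succ k ih =>
    rw [pow_succ' n k]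
    generalize hm : n ^ k = m at ih ⊢
    have hm_pos : 0 < m := hm ▸ pow_pos hn k
    calc f n * (((n * m : ℕ) : R) ^ s - (n * m : ℕ))
        = n * (f n * ((m : R) ^ s - m)) + ((n : R) ^ s - n) * (f n * (m : R) ^ s) := by
          push_cast; ring
      _ ≤ n * (((n : R) ^ s - n) * f m) + ((n : R) ^ s - n) * (f n * (m : R) ^ s) := by
          gcongr
      _ = ((n : R) ^ s - n) * (n * f m + f n * (m : R) ^ s) := by ring
      _ ≤ ((n : R) ^ s - n) * f (n * m) :=
          mul_le_mul_of_nonneg_left (hsuper m hm_pos) hpow_sub_nonneg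

theorem isEquivalent_natCast_pow_sub_self {s : ℕ} (hs : 2 ≤ s) :
    (fun m : ℕ ↦ (m : ℝ) ^ s - m) ~[atTop] fun m : ℕ ↦ (m : ℝ) ^ s := by
  have hself : (fun m : ℕ ↦ (m : ℝ)) =o[atTop] fun m : ℕ ↦ (m : ℝ) ^ s := by
    simpa [Function.comp_def] using
      (isLittleO_pow_pow_atTop_of_lt (𝕜 := ℝ) (p := 1) hs).comp_tendsto tendsto_natCast_atTop_atTop
  exact IsEquivalent.refl.sub_isLittleO hself

theorem tendsto_natCast_pow_sub_self_div_choose {s : ℕ} (hs : 2 ≤ s) :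
    Tendsto (fun m : ℕ ↦ ((m : ℝ) ^ s - m) / m.choose s) atTop (𝓝 s.factorial) := by
  refine ((isEquivalent_natCast_pow_sub_self hs).div (isEquivalent_choose s)).symm.tendsto_nhds
    (tendsto_const_nhds.congr' ?_)
  filter_upwards [eventually_ne_atTop 0] with m hm
  simp only [Pi.div_apply]
  field_simp

theorem le_mul_pow_sub_self_div_factorial_of_tendsto_div_choose {f : ℕ → ℝ} {s n : ℕ} {γ : ℝ}
    (hs : 2 ≤ s) (hn : 2 ≤ n) (hf_one : 0 ≤ f 1)
    (hsuper : ∀ b : ℕ, 0 < b → (n : ℝ) * f b + f n * (b : ℝ) ^ s ≤ f (n * b))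
    (hγ : Tendsto (fun m : ℕ ↦ f m / m.choose s) atTop (𝓝 γ)) :
    f n ≤ γ * (((n : ℝ) ^ s - n) / s.factorial) := by
  have hpow : Tendsto (fun k : ℕ ↦ n ^ k) atTop atTop := tendsto_pow_atTop_atTop_of_one_lt hn
  have hlimit : f n * s.factorial ≤ ((n : ℝ) ^ s - n) * γ := by
    refine le_of_tendsto_of_tendsto'
      (((tendsto_natCast_pow_sub_self_div_choose hs).comp hpow).const_mul (f n))
      ((hγ.comp hpow).const_mul ((n : ℝ) ^ s - n)) fun k ↦ ?_
    simp only [Function.comp_apply, ← mul_div_assoc]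
    gcongr ?_ / _
    exact mul_pow_sub_self_le_mul_apply_pow (by lia) (by lia) hf_one hsuper k
  rw [← mul_div_assoc, mul_comm γ]
  exact (le_div_iff₀ (by positivity)).2 hlimit

theorem exists_tendsto_and_forall_ge_le_of_succ_le {g : ℕ → ℝ} {s : ℕ} {c : ℝ}
    (hsucc : ∀ n ≥ s, g (n + 1) ≤ g n) (hlower : ∀ n ≥ s, c ≤ g n) :
    ∃ γ, Tendsto g atTop (𝓝 γ) ∧ ∀ n ≥ s, γ ≤ g n := by
  have hanti : AntitoneOn g (Set.Ici s) := antitoneOn_nat_Ici_of_succ_le hsucc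
  have hbdd : BddBelow (g '' Set.Ici s) := ⟨c, Set.forall_mem_image.2 hlower⟩
  exact ⟨_, Real.tendsto_atTop_csInf_of_antitoneOn_bddBelow_nat_Ici hanti hbdd,
    fun n hn ↦ csInf_le hbdd (Set.mem_image_of_mem g hn)⟩

/-- Recurrence sequences: if `f : ℕ → ℝ` is non-negative, vanishes below `s`,
`f s = 1`, the density `f n / C(n, s)` is non-increasing for `n ≥ s`, and
`f (a·b) ≥ a·f b + f a·bˢ` for all positive `a, b`, then `f n / C(n, s)`
converges to some `γ` with `γ·(nˢ - n)/s! ≥ f n ≥ γ·C(n, s)` for all `n`. -/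
theorem stmt_18 (s : ℕ) (hs : 2 ≤ s) (f : ℕ → ℝ)
    (hnonneg : ∀ n, 0 ≤ f n) (hzero : ∀ n < s, f n = 0) (hone : f s = 1)
    (hmono : ∀ n, s ≤ n →
      f (n + 1) / ((n + 1).choose s : ℝ) ≤ f n / (n.choose s : ℝ))
    (hsuper : ∀ a b : ℕ, 0 < a → 0 < b →
      (a : ℝ) * f b + f a * (b : ℝ) ^ s ≤ f (a * b)) :
    ∃ γ : ℝ,
      Filter.Tendsto (fun n : ℕ => f n / (n.choose s : ℝ)) Filter.atTop (nhds γ) ∧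
      ∀ n : ℕ, f n ≤ γ * (((n : ℝ) ^ s - (n : ℝ)) / (Nat.factorial s : ℝ)) ∧
        γ * (n.choose s : ℝ) ≤ f n := by
  obtain ⟨γ, hγ, hγ_le⟩ := exists_tendsto_and_forall_ge_le_of_succ_le
    (g := fun n ↦ f n / (n.choose s : ℝ)) hmono fun n _ ↦ div_nonneg (hnonneg n) (Nat.cast_nonneg _)
  refine ⟨γ, hγ, fun n ↦ ⟨?_, ?_⟩⟩
  · obtain rfl | rfl | hn : n = 0 ∨ n = 1 ∨ 2 ≤ n := by lia
    · simp [hzero 0 (by lia), show s ≠ 0 by lia]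
    · simp [hzero 1 hs]
    · exact le_mul_pow_sub_self_div_factorial_of_tendsto_div_choose hs hn (hnonneg 1)
        (fun b ↦ hsuper n b (by lia)) hγ
  · obtain hn | hn := lt_or_ge n s
    · simp [hzero n hn, Nat.choose_eq_zero_of_lt hn]
    · exact (le_div_iff₀ (Nat.cast_pos.2 (Nat.choose_pos hn))).1 (hγ_le n hn)
end
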